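/- arXiv:1207.0091 — 3 statements merged into one kernel-verified Lean document; each statement's English description precedes it below -/
import Mathlib

section
/- Let X(S) be a sofic S-gap shift with Fischer cover 𝒢 = (G, ℒ). Then every state of M_G contains the same number of vertices of G. -/
/-! ## Basic symbolic dynamics over `ℤ` -/

/-- The shift map on bi-infinite sequences. -/
def shiftMap {A : Type} (x : ℤ → A) : ℤ → A := fun i => x (i + 1)

/-- The word `w` occurs in `x` starting at coordinate `i`. -/
def occursAt {A : Type} (w : List A) (x : ℤ → A) (i : ℤ) : Prop :=
  ∀ (k : ℕ) (h : k < w.length), x (i + k) = w.get ⟨k, h⟩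

/-- The word `w` occurs somewhere in `x`. -/
def occursIn {A : Type} (w : List A) (x : ℤ → A) : Prop := ∃ i : ℤ, occursAt w x i

/-- The word `w` belongs to the language of `X`. -/
def InLang {A : Type} (X : Set (ℤ → A)) (w : List A) : Prop := ∃ x ∈ X, occursIn w x

/-- `X` is a subshift: it is defined by a set of forbidden words. -/
def IsSubshift {A : Type} (X : Set (ℤ → A)) : Prop :=
  ∃ F : Set (List A), X = { x | ∀ w ∈ F, ¬ occursIn w x }

/-- `X` is a shift of finite type: defined by a finite set of forbidden words. -/
def IsSFT {A : Type} (X : Set (ℤ → A)) : Prop :=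
  ∃ F : Finset (List A), X = { x | ∀ w ∈ F, ¬ occursIn w x }

/-- `φ` is a sliding block code on `X` (with some memory `m` and anticipation `n`). -/
def IsSliding {A B : Type} (X : Set (ℤ → A)) (φ : (ℤ → A) → ℤ → B) : Prop :=
  ∃ m n : ℕ, ∀ x ∈ X, ∀ y ∈ X, ∀ i : ℤ,
    (∀ j : ℤ, i - (m : ℤ) ≤ j → j ≤ i + (n : ℤ) → x j = y j) → φ x i = φ y i

/-- `φ` is a factor code from `X` onto `Y`. -/
def IsFactorCode {A B : Type} (X : Set (ℤ → A)) (Y : Set (ℤ → B))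
    (φ : (ℤ → A) → ℤ → B) : Prop :=
  IsSliding X φ ∧ (∀ x ∈ X, φ x ∈ Y) ∧ (∀ y ∈ Y, ∃ x ∈ X, φ x = y) ∧
    (∀ x ∈ X, φ (shiftMap x) = shiftMap (φ x))

/-- `X` and `Y` are topologically conjugate (via mutually inverse sliding block codes). -/
def TopConjugate {A B : Type} (X : Set (ℤ → A)) (Y : Set (ℤ → B)) : Prop :=
  ∃ (φ : (ℤ → A) → ℤ → B) (ψ : (ℤ → B) → ℤ → A),
    IsFactorCode X Y φ ∧ IsFactorCode Y X ψ ∧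
    (∀ x ∈ X, ψ (φ x) = x) ∧ (∀ y ∈ Y, φ (ψ y) = y)

/-- `φ` is a right-resolving (1-block) code on `X`: it is induced by a symbol map `Φ`
such that whenever `ab` and `ac` are 2-blocks of `X` with `Φ b = Φ c`, then `b = c`. -/
def IsRightResolvingCode {A B : Type} (X : Set (ℤ → A)) (φ : (ℤ → A) → ℤ → B) : Prop :=
  ∃ Φ : A → B, (∀ x ∈ X, ∀ i : ℤ, φ x i = Φ (x i)) ∧
    ∀ a b c : A, InLang X [a, b] → InLang X [a, c] → Φ b = Φ c → b = c

/-- `x` is a doubly transitive point of `X`. -/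
def DoublyTransitive {A : Type} (X : Set (ℤ → A)) (x : ℤ → A) : Prop :=
  ∀ w : List A, InLang X w →
    (∀ N : ℤ, ∃ i ≥ N, occursAt w x i) ∧ (∀ N : ℤ, ∃ i ≤ N, occursAt w x i)

/-- `φ : W → Y` is one-to-one almost everywhere: every doubly transitive point of `Y`
has exactly one preimage in `W`. -/
def OneOneAE {A B : Type} (W : Set (ℤ → A)) (Y : Set (ℤ → B))
    (φ : (ℤ → A) → ℤ → B) : Prop :=
  ∀ y ∈ Y, DoublyTransitive Y y → ∃! x, x ∈ W ∧ φ x = y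

/-- `φ` is finite-to-one on `W` (uniformly bounded fibers). -/
def FiniteToOne {A B : Type} (W : Set (ℤ → A)) (φ : (ℤ → A) → ℤ → B) : Prop :=
  ∃ M : ℕ, ∀ y : ℤ → B, { x ∈ W | φ x = y }.Finite ∧ { x ∈ W | φ x = y }.ncard ≤ M

/-- `X` and `Y` are right-resolving almost conjugate. -/
def RRAlmostConjugate {A B : Type} (X : Set (ℤ → A)) (Y : Set (ℤ → B)) : Prop :=
  ∃ (C : Type) (_ : Finite C) (W : Set (ℤ → C))
    (φX : (ℤ → C) → ℤ → A) (φY : (ℤ → C) → ℤ → B),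
    IsSFT W ∧ IsFactorCode W X φX ∧ IsFactorCode W Y φY ∧
    IsRightResolvingCode W φX ∧ IsRightResolvingCode W φY ∧
    OneOneAE W X φX ∧ OneOneAE W Y φY

/-- `X` and `Y` are right-resolving finitely equivalent. -/
def RRFinEquiv {A B : Type} (X : Set (ℤ → A)) (Y : Set (ℤ → B)) : Prop :=
  ∃ (C : Type) (_ : Finite C) (W : Set (ℤ → C))
    (φX : (ℤ → C) → ℤ → A) (φY : (ℤ → C) → ℤ → B),
    IsSFT W ∧ IsFactorCode W X φX ∧ IsFactorCode W Y φY ∧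
    IsRightResolvingCode W φX ∧ IsRightResolvingCode W φY ∧
    FiniteToOne W φX ∧ FiniteToOne W φY

/-- An irreducible shift space. -/
def IrreducibleShift {A : Type} (X : Set (ℤ → A)) : Prop :=
  ∀ u w : List A, InLang X u → InLang X w → ∃ v : List A, InLang X (u ++ v ++ w)

/-- `v` is a synchronizing word for `X`. -/
def SynchronizingWord {A : Type} (X : Set (ℤ → A)) (v : List A) : Prop :=
  InLang X v ∧ ∀ u w : List A, InLang X (u ++ v) → InLang X (v ++ w) →
    InLang X (u ++ v ++ w)

/-- A synchronized system: an irreducible subshift with a synchronizing word. -/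
def Synchronized {A : Type} (X : Set (ℤ → A)) : Prop :=
  IsSubshift X ∧ IrreducibleShift X ∧ ∃ v : List A, SynchronizingWord X v

/-! ## S-gap shifts and β-shifts -/

/-- The S-gap shift `X(S)` for `S ⊆ ℕ ∪ {0}`: numbers of `0`s between successive `1`s
lie in `S`; `1`s occur infinitely often in both directions unless `S` is infinite. -/
def SGap (S : Set ℕ) : Set (ℤ → Fin 2) :=
  { x | (∀ i j : ℤ, i < j → x i = 1 → x j = 1 →
          (∀ k : ℤ, i < k → k < j → x k = 0) → (j - i - 1).toNat ∈ S) ∧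
        (S.Finite → (∀ N : ℤ, ∃ i ≥ N, x i = 1) ∧ (∀ N : ℤ, ∃ i ≤ N, x i = 1)) }

/-- Remainders of the (greedy) β-expansion of `1` with digits in `{0,1}`:
`betaRem β n = 1 - Σ_{i ≤ n} a_i β^{-i}`. -/
noncomputable def betaRem (β : ℝ) : ℕ → ℝ
  | 0 => 1
  | n + 1 => betaRem β n - (if β⁻¹ ^ (n + 1) ≤ betaRem β n then β⁻¹ ^ (n + 1) else 0)

/-- The digit `a_{n+1}` of the β-expansion `1_β = a_1 a_2 a_3 ⋯` of `1`. -/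
noncomputable def betaDigit (β : ℝ) (n : ℕ) : Fin 2 :=
  if β⁻¹ ^ (n + 1) ≤ betaRem β n then 1 else 0

/-- Lexicographic order on one-sided sequences. -/
def lexLE {A : Type} [LinearOrder A] (u v : ℕ → A) : Prop :=
  u = v ∨ ∃ n : ℕ, (∀ k < n, u k = v k) ∧ u n < v n

/-- The β-shift: `x ∈ X_β` iff every right tail of `x` is lexicographically `≤ 1_β`. -/
def betaShift (β : ℝ) : Set (ℤ → Fin 2) :=
  { x | ∀ i : ℤ, lexLE (fun n : ℕ => x (i + (n : ℤ))) (betaDigit β) }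

/-- The set `S = {i - 1 : a_i = 1}` of the associated S-gap shift `ASS(X_β) = X(S)`. -/
def assocS (β : ℝ) : Set ℕ := { n | betaDigit β n = 1 }

/-- Eventual periodicity of a sequence. -/
def EvPeriodic {α : Type} (a : ℕ → α) : Prop :=
  ∃ p : ℕ, 0 < p ∧ ∃ N : ℕ, ∀ n ≥ N, a (n + p) = a n

/-! ## Finite directed multigraphs, edge shifts, labeled graphs -/

structure FinGraph where
  V : Type
  E : Type
  [fintypeV : Fintype V]
  [fintypeE : Fintype E]
  src : E → V
  tgt : E → V

attribute [instance] FinGraph.fintypeV FinGraph.fintypeE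

/-- The edge shift of a graph. -/
def FinGraph.edgeShift (G : FinGraph) : Set (ℤ → G.E) :=
  { ξ | ∀ i : ℤ, G.tgt (ξ i) = G.src (ξ (i + 1)) }

structure GraphHom (G H : FinGraph) where
  vmap : G.V → H.V
  emap : G.E → H.E
  src_eq : ∀ e : G.E, H.src (emap e) = vmap (G.src e)
  tgt_eq : ∀ e : G.E, H.tgt (emap e) = vmap (G.tgt e)

structure GraphIso (G H : FinGraph) where
  vmap : G.V ≃ H.V
  emap : G.E ≃ H.E
  src_eq : ∀ e : G.E, H.src (emap e) = vmap (G.src e)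
  tgt_eq : ∀ e : G.E, H.tgt (emap e) = vmap (G.tgt e)

/-- `H ⪯ G` : the edge shift `X_H` is a right-resolving factor of `X_G`,
via a graph homomorphism whose restriction to each out-edge set is injective. -/
def RRFactorOf (H G : FinGraph) : Prop :=
  ∃ Φ : GraphHom G H,
    (∀ η ∈ H.edgeShift, ∃ ξ ∈ G.edgeShift, ∀ i : ℤ, Φ.emap (ξ i) = η i) ∧
    ∀ I : G.V, Set.InjOn Φ.emap { e : G.E | G.src e = I }

/-- `M` is the minimal right-resolving factor graph `M_G` of `G`: it is the smallest
element in the order `⪯` on graphs right-resolving-factoring from `G`. -/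
def IsMinFactorGraph (M G : FinGraph) : Prop :=
  RRFactorOf M G ∧ ∀ H : FinGraph, RRFactorOf H G → RRFactorOf M H

/-- The nested sequence of equivalence relations `∼ₙ` on vertices of `G` whose limiting
partition gives the states of `M_G`. -/
def simRel (G : FinGraph) : ℕ → G.V → G.V → Prop
  | 0, _, _ => True
  | n + 1, I, J => ∀ K : G.V,
      { e : G.E | G.src e = I ∧ simRel G n (G.tgt e) K }.ncard =
      { e : G.E | G.src e = J ∧ simRel G n (G.tgt e) K }.ncard

/-- The limiting equivalence relation; its classes are the states of `M_G`. -/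
def simLim (G : FinGraph) (I J : G.V) : Prop := ∀ n : ℕ, simRel G n I J

/-- A labeled graph over the alphabet `A`. -/
structure LGraph (A : Type) where
  G : FinGraph
  label : G.E → A

def LGraph.RightResolving {A : Type} (𝒢 : LGraph A) : Prop :=
  ∀ e f : 𝒢.G.E, 𝒢.G.src e = 𝒢.G.src f → 𝒢.label e = 𝒢.label f → e = f

/-- `𝒢` presents the shift space `X`: `X = ℒ_∞(X_G)`. -/
def LGraph.Presents {A : Type} (𝒢 : LGraph A) (X : Set (ℤ → A)) : Prop :=
  X = { x | ∃ ξ ∈ 𝒢.G.edgeShift, ∀ i : ℤ, 𝒢.label (ξ i) = x i }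

def FinGraph.Irreducible (G : FinGraph) : Prop :=
  ∀ I J : G.V, Relation.ReflTransGen (fun u v => ∃ e : G.E, G.src e = u ∧ G.tgt e = v) I J

/-- A sofic shift: one presented by a finite labeled graph. -/
def IsSofic {A : Type} (X : Set (ℤ → A)) : Prop := ∃ 𝒢 : LGraph A, 𝒢.Presents X

/-- The Fischer cover: the minimal right-resolving presentation of an irreducible
sofic shift. -/
def IsFischerCover {A : Type} (𝒢 : LGraph A) (X : Set (ℤ → A)) : Prop :=
  𝒢.G.Irreducible ∧ 𝒢.RightResolving ∧ 𝒢.Presents X ∧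
    ∀ ℋ : LGraph A, ℋ.RightResolving → ℋ.Presents X →
      Fintype.card 𝒢.G.V ≤ Fintype.card ℋ.G.V

/-! ## Countable labeled graphs (for almost Markov systems) -/

structure CtblLGraph (A : Type) where
  V : Type
  E : Type
  ctblV : Countable V
  ctblE : Countable E
  src : E → V
  tgt : E → V
  label : E → A

def CtblLGraph.RightResolving {A : Type} (𝒢 : CtblLGraph A) : Prop :=
  ∀ e f : 𝒢.E, 𝒢.src e = 𝒢.src f → 𝒢.label e = 𝒢.label f → e = f

def CtblLGraph.Irreducible {A : Type} (𝒢 : CtblLGraph A) : Prop :=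
  ∀ I J : 𝒢.V, Relation.ReflTransGen (fun u v => ∃ e : 𝒢.E, 𝒢.src e = u ∧ 𝒢.tgt e = v) I J

/-- `w` is the label of some finite path in `𝒢`. -/
def CtblLGraph.IsPathLabel {A : Type} (𝒢 : CtblLGraph A) (w : List A) : Prop :=
  ∃ es : List 𝒢.E, es.map 𝒢.label = w ∧ es.Chain' (fun e f => 𝒢.tgt e = 𝒢.src f)

/-- `𝒢` presents `X` (on the level of languages). -/
def CtblLGraph.PresentsLang {A : Type} (𝒢 : CtblLGraph A) (X : Set (ℤ → A)) : Prop :=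
  ∀ w : List A, InLang X w ↔ 𝒢.IsPathLabel w

/-- An almost Markov system: it has a right-resolving presentation by a countable
irreducible labeled graph. -/
def AlmostMarkov {A : Type} (X : Set (ℤ → A)) : Prop :=
  ∃ 𝒢 : CtblLGraph A, 𝒢.RightResolving ∧ 𝒢.Irreducible ∧ 𝒢.PresentsLang X

/-! ## Words `𝒟(S)`, primitivity -/

/-- The word `𝒟(S) = d_1 d_2 ⋯ d_{k-2} (d_{k-1} + s_0 + 1)` for `S = {s_0 < ⋯ < s_{k-1}}`
enumerated by `s`. -/
def DSword (k : ℕ) (s : ℕ → ℕ) : List ℕ :=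
  (List.range (k - 1)).map fun i =>
    if i + 2 < k then s (i + 1) - s i else s (i + 1) - s i + s 0 + 1

/-- The word `𝒟(S)` of a finite set `S = {s_0 < s_1 < ⋯ < s_{k-1}}` of naturals. -/
def gapWord (F : Finset ℕ) : List ℕ :=
  let l := F.sort (· ≤ ·)
  (List.range (l.length - 1)).map fun i =>
    if i + 2 < l.length then l.getD (i + 1) 0 - l.getD i 0
    else l.getD (i + 1) 0 - l.getD i 0 + l.getD 0 0 + 1

/-- `q` is a period of the word `w` (in the sense `w = u^{|w|/q}` with `|u| = q`). -/
def ListPeriod (w : List ℕ) (q : ℕ) : Prop :=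
  0 < q ∧ q ∣ w.length ∧ ∀ i : ℕ, i + q < w.length → w.getD i 0 = w.getD (i + q) 0

/-- A word is primitive if its least period equals its length. -/
def ListPrimitive (w : List ℕ) : Prop := ∀ q : ℕ, ListPeriod w q → q = w.length

/-! ## Entropy, periodic points and zeta functions -/

/-- The number of words of length `n` in the language of `X`. -/
noncomputable def wordCount {A : Type} (X : Set (ℤ → A)) (n : ℕ) : ℕ :=
  { w : List A | w.length = n ∧ InLang X w }.ncard

/-- `X` has topological entropy `h`, i.e. `(1/n) log |ℬ_n(X)| → h`. -/
def HasEntropy {A : Type} (X : Set (ℤ → A)) (h : ℝ) : Prop :=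
  Filter.Tendsto (fun n : ℕ => Real.log (wordCount X n) / n) Filter.atTop (nhds h)

/-- The topological entropy of `X`. -/
noncomputable def entropy {A : Type} (X : Set (ℤ → A)) : ℝ :=
  Filter.atTop.limsup fun n : ℕ => Real.log (wordCount X n) / n

/-- The set of points of `X` of period `n`. -/
def perPts {A : Type} (X : Set (ℤ → A)) (n : ℕ) : Set (ℤ → A) :=
  { x ∈ X | shiftMap^[n] x = x }

/-- `p_n`, the number of points of period `n`. -/
noncomputable def pcount {A : Type} (X : Set (ℤ → A)) (n : ℕ) : ℕ := (perPts X n).ncard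

/-- The exponential of a formal power series (intended for zero constant term). -/
noncomputable def expPS (g : PowerSeries ℚ) : PowerSeries ℚ :=
  PowerSeries.mk fun n =>
    ∑ k ∈ Finset.range (n + 1), (PowerSeries.coeff n (g ^ k)) / (Nat.factorial k : ℚ)

/-- The Artin–Mazur zeta function `ζ_σ(t) = exp (Σ_{n ≥ 1} (p_n / n) tⁿ)` of `X`. -/
noncomputable def zetaPS {A : Type} (X : Set (ℤ → A)) : PowerSeries ℚ :=
  expPS (PowerSeries.mk fun n => if n = 0 then 0 else (pcount X n : ℚ) / (n : ℚ))

/-! ## Continued fractions parametrization of S-gap shifts -/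

/-- The value of a finite continued fraction `[a_0; a_1, …, a_n]`. -/
def cfVal : List ℕ → ℚ
  | [] => 0
  | [a] => (a : ℚ)
  | a :: rest => (a : ℚ) + 1 / cfVal rest

/-- The sequence `d_0 = s_0`, `d_n = s_n - s_{n-1}` of gap differences of `S`. -/
noncomputable def dSeq (S : Set ℕ) (n : ℕ) : ℕ :=
  if n = 0 then Nat.nth (· ∈ S) 0 else Nat.nth (· ∈ S) n - Nat.nth (· ∈ S) (n - 1)

open scoped Classical in
/-- The real number `x_S = [d_0; d_1, d_2, …]` assigned to the S-gap shift `X(S)`. -/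
noncomputable def xOf (S : Set ℕ) : ℝ :=
  if hS : S.Finite then ((cfVal ((List.range hS.toFinset.card).map (dSeq S)) : ℚ) : ℝ)
  else Filter.atTop.limsup fun n : ℕ =>
    ((cfVal ((List.range (n + 1)).map (dSeq S)) : ℚ) : ℝ)

/-! ## Auxiliary material for the proof -/

namespace SGapProof

theorem fin2 : ∀ a : Fin 2, a = 0 ∨ a = 1 := by decide

variable {L : LGraph (Fin 2)}

/-- `Hop L k u v`: there is a path from `u` to `v` labelled `0^k 1`. -/
def Hop (L : LGraph (Fin 2)) : ℕ → L.G.V → L.G.V → Prop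
  | 0, u, v => ∃ e, L.G.src e = u ∧ L.label e = 1 ∧ L.G.tgt e = v
  | k + 1, u, v => ∃ e, L.G.src e = u ∧ L.label e = 0 ∧ Hop L k (L.G.tgt e) v

/-- `Zr L k u v`: there is a path from `u` to `v` labelled `0^k`. -/
def Zr (L : LGraph (Fin 2)) : ℕ → L.G.V → L.G.V → Prop
  | 0, u, v => u = v
  | k + 1, u, v => ∃ e, L.G.src e = u ∧ L.label e = 0 ∧ Zr L k (L.G.tgt e) v

def HopL (L : LGraph (Fin 2)) : List ℕ → L.G.V → L.G.V → Prop
  | [], u, v => u = v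
  | s :: l, u, v => ∃ m, Hop L s u m ∧ HopL L l m v

/-- The set of gaps available from `v`. -/
def R (L : LGraph (Fin 2)) (v : L.G.V) : Set ℕ := { k | ∃ w, Hop L k v w }

theorem Hop.det (hr : L.RightResolving) : ∀ {k u v w}, Hop L k u v → Hop L k u w → v = w
  | 0, u, v, w, ⟨e, h1, h2, h3⟩, ⟨f, g1, g2, g3⟩ => by
      have : e = f := hr e f (h1.trans g1.symm) (h2.trans g2.symm)
      subst this; exact h3.symm.trans g3
  | k + 1, u, v, w, ⟨e, h1, h2, h3⟩, ⟨f, g1, g2, g3⟩ => by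
      have : e = f := hr e f (h1.trans g1.symm) (h2.trans g2.symm)
      subst this; exact Hop.det hr h3 g3

theorem HopL.append {l l' : List ℕ} : ∀ {u v}, HopL L (l ++ l') u v →
    ∃ m, HopL L l u m ∧ HopL L l' m v := by
  induction l with
  | nil => intro u v h; exact ⟨u, rfl, h⟩
  | cons s l ih =>
    rintro u v ⟨m, h1, h2⟩
    obtain ⟨m', h3, h4⟩ := ih h2
    exact ⟨m', ⟨m, h1, h3⟩, h4⟩

theorem HopL.det (hr : L.RightResolving) {l : List ℕ} : ∀ {u v w}, HopL L l u v →
    HopL L l u w → v = w := by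
  induction l with
  | nil => intro u v w h h'; exact h.symm.trans h'
  | cons s l ih =>
    rintro u v w ⟨m, h1, h2⟩ ⟨m', h3, h4⟩
    have := h1.det hr h3
    subst this
    exact ih h2 h4

theorem Zr.hop {i k : ℕ} : ∀ {u v w}, Zr L i u v → Hop L k v w → Hop L (k + i) u w := by
  induction i with
  | zero => rintro u v w rfl h; exact h
  | succ i ih =>
    rintro u v w ⟨e, h1, h2, h3⟩ h
    exact ⟨e, h1, h2, ih h3 h⟩

theorem Zr.hop_inv (hr : L.RightResolving) {i k : ℕ} : ∀ {u v w}, Zr L i u v →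
    Hop L (k + i) u w → Hop L k v w := by
  induction i with
  | zero => rintro u v w rfl h; exact h
  | succ i ih =>
    rintro u v w ⟨e, h1, h2, h3⟩ ⟨f, g1, g2, g3⟩
    have : e = f := hr e f (h1.trans g1.symm) (h2.trans g2.symm)
    subst this
    exact ih h3 g3

theorem Zr.snoc {i : ℕ} : ∀ {u v} (e : L.G.E), Zr L i u v → L.G.src e = v → L.label e = 0 →
    Zr L (i + 1) u (L.G.tgt e) := by
  induction i with
  | zero => rintro u v e rfl h h'; exact ⟨e, h, h', rfl⟩
  | succ i ih =>
    rintro u v e ⟨f, h1, h2, h3⟩ h h'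
    exact ⟨f, h1, h2, ih e h3 h h'⟩

theorem R_tgt (hr : L.RightResolving) (e : L.G.E) (he : L.label e = 0) (k : ℕ) :
    k ∈ R L (L.G.tgt e) ↔ k + 1 ∈ R L (L.G.src e) := by
  constructor
  · rintro ⟨w, h⟩; exact ⟨w, e, rfl, he, h⟩
  · rintro ⟨w, f, h1, h2, h3⟩
    have : f = e := hr f e h1 (h2.trans he.symm)
    subst this; exact ⟨w, h3⟩

theorem zero_mem_R (v : L.G.V) : 0 ∈ R L v ↔ ∃ e, L.G.src e = v ∧ L.label e = 1 := by
  constructor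
  · rintro ⟨w, e, h1, h2, _⟩; exact ⟨e, h1, h2⟩
  · rintro ⟨e, h1, h2⟩; exact ⟨_, e, h1, h2, rfl⟩

theorem hop_of_path (ξ : ℤ → L.G.E) (hξ : ξ ∈ L.G.edgeShift) (k : ℕ) : ∀ i : ℤ,
    (∀ m : ℕ, m < k → L.label (ξ (i + m)) = 0) → L.label (ξ (i + k)) = 1 →
    Hop L k (L.G.src (ξ i)) (L.G.tgt (ξ (i + k))) := by
  induction k with
  | zero => intro i _ h; simp at h; exact ⟨ξ i, rfl, h, by simp⟩
  | succ k ih =>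
    intro i h0 h1
    have e1 : i + ((k + 1 : ℕ) : ℤ) = (i + 1) + k := by push_cast; ring
    rw [e1] at h1 ⊢
    refine ⟨ξ i, rfl, by simpa using h0 0 (by omega), ?_⟩
    rw [hξ i]
    refine ih (i + 1) (fun m hm => ?_) h1
    have := h0 (m + 1) (by omega)
    have e2 : i + ((m + 1 : ℕ) : ℤ) = (i + 1) + m := by push_cast; ring
    rwa [e2] at this

/-! ### Points with prescribed gaps -/

def pos (g : ℤ → ℕ) : ℤ → ℤ
  | Int.ofNat n => ∑ m ∈ Finset.range n, ((g m : ℤ) + 1)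
  | Int.negSucc n => - ∑ m ∈ Finset.range (n + 1), ((g (Int.negSucc m) : ℤ) + 1)

theorem pos_succ (g : ℤ → ℕ) (n : ℤ) : pos g (n + 1) = pos g n + g n + 1 := by
  cases n with
  | ofNat n =>
    have : (Int.ofNat n + 1) = Int.ofNat (n + 1) := rfl
    rw [this]
    simp only [pos, Finset.sum_range_succ, Int.ofNat_eq_natCast]
    ring
  | negSucc n =>
    cases n with
    | zero =>
      have : (Int.negSucc 0 + 1) = Int.ofNat 0 := rfl
      rw [this]
      simp [pos]
    | succ n =>
      have : (Int.negSucc (n + 1) + 1) = Int.negSucc n := by omega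
      rw [this]
      simp only [pos]
      rw [Finset.sum_range_succ _ (n + 1)]
      ring

theorem pos_strictMono (g : ℤ → ℕ) : StrictMono (pos g) :=
  strictMono_int_of_lt_succ fun n => by rw [pos_succ]; omega

theorem pos_ge (g : ℤ → ℕ) (n : ℕ) : (n : ℤ) ≤ pos g n := by
  induction n with
  | zero => simp [pos]
  | succ n ih => push_cast; rw [pos_succ]; omega

theorem pos_le (g : ℤ → ℕ) (n : ℕ) : pos g (-(n : ℤ)) ≤ -(n : ℤ) := by
  induction n with
  | zero => simp [pos]
  | succ n ih =>
    have := pos_succ g (-((n + 1 : ℕ) : ℤ))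
    have e : -((n + 1 : ℕ) : ℤ) + 1 = -(n : ℤ) := by push_cast; ring
    rw [e] at this
    push_cast at this ⊢
    omega

open scoped Classical in
noncomputable def pt (g : ℤ → ℕ) (i : ℤ) : Fin 2 := if ∃ n, pos g n = i then 1 else 0

theorem pt_pos (g : ℤ → ℕ) (n : ℤ) : pt g (pos g n) = 1 := by
  unfold pt; rw [if_pos ⟨n, rfl⟩]

theorem pt_eq_one {g : ℤ → ℕ} {i : ℤ} (h : pt g i = 1) : ∃ n, pos g n = i := by
  by_contra h'
  unfold pt at h; rw [if_neg h'] at h; exact absurd h (by decide)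

theorem pt_between (g : ℤ → ℕ) (n : ℤ) (i : ℤ) (h1 : pos g n < i) (h2 : i < pos g (n + 1)) :
    pt g i = 0 := by
  rcases fin2 (pt g i) with h | h
  · exact h
  · obtain ⟨m, rfl⟩ := pt_eq_one h
    have := (pos_strictMono g).lt_iff_lt.1 h1
    have := (pos_strictMono g).lt_iff_lt.1 h2
    omega

theorem pt_mem (S : Set ℕ) (g : ℤ → ℕ) (hg : ∀ n, g n ∈ S) : pt g ∈ SGap S := by
  refine ⟨?_, fun _ => ⟨fun N => ?_, fun N => ?_⟩⟩
  · intro i j hij hi hj hk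
    obtain ⟨a, rfl⟩ := pt_eq_one hi
    obtain ⟨b, rfl⟩ := pt_eq_one hj
    have hab := (pos_strictMono g).lt_iff_lt.1 hij
    have : b = a + 1 := by
      by_contra hne
      have h2 : pos g (a + 1) < pos g b := pos_strictMono g (by omega)
      have h1 : pos g a < pos g (a + 1) := pos_strictMono g (by omega)
      have := hk _ h1 h2
      rw [pt_pos] at this
      exact absurd this (by decide)
    subst this
    rw [pos_succ]
    have : (pos g a + g a + 1 - pos g a - 1).toNat = g a := by omega
    rw [this]; exact hg a
  · refine ⟨pos g (N.toNat : ℤ), ?_, pt_pos _ _⟩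
    have := pos_ge g N.toNat
    omega
  · refine ⟨pos g (-((-N).toNat : ℤ)), ?_, pt_pos _ _⟩
    have := pos_le g (-N).toNat
    omega

theorem hopL_of_path (g : ℤ → ℕ) (ξ : ℤ → L.G.E) (hξ : ξ ∈ L.G.edgeShift)
    (hl : ∀ i, L.label (ξ i) = pt g i) (l : List ℕ) : ∀ n : ℤ,
    (∀ (m : ℕ) a, l[m]? = some a → g (n + m) = a) →
    ∃ w, HopL L l (L.G.tgt (ξ (pos g n))) w := by
  induction l with
  | nil => intro n _; exact ⟨_, rfl⟩
  | cons s l ih =>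
    intro n h
    have h0 : g n = s := by simpa using h 0 s (by simp)
    obtain ⟨w, hw⟩ := ih (n + 1) (fun m a hm => by
      have := h (m + 1) a (by simpa using hm)
      rw [← this]; congr 1; push_cast; ring)
    refine ⟨w, _, ?_, hw⟩
    rw [hξ, pos_succ]
    have e : pos g n + (g n : ℤ) + 1 = (pos g n + 1) + (g n : ℕ) := by ring
    rw [← h0, e]
    apply hop_of_path ξ hξ
    · intro m hm
      rw [hl]
      apply pt_between g n
      · omega
      · rw [pos_succ]; omega
    · rw [hl, ← e, ← pos_succ, pt_pos]

theorem hopL_exists {S : Set ℕ} (hp : L.Presents (SGap S)) {s : ℕ} (hs : s ∈ S)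
    (l : List ℕ) (hl : ∀ a ∈ l, a ∈ S) : ∃ u w, HopL L l u w := by
  let g : ℤ → ℕ := fun n => l.getD n.toNat s
  have hg : ∀ n, g n ∈ S := by
    intro n
    show l.getD n.toNat s ∈ S
    rw [List.getD_eq_getElem?_getD]
    cases h : l[n.toNat]? with
    | none => simpa using hs
    | some a => simpa using hl a (List.mem_of_getElem? h)
  have hm := pt_mem S g hg
  rw [hp] at hm
  obtain ⟨ξ, hξ, hlab⟩ := hm
  obtain ⟨w, hw⟩ := hopL_of_path g ξ hξ hlab l 0 (fun m a h => by
    show l.getD (0 + (m : ℤ)).toNat s = a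
    simp [List.getD_eq_getElem?_getD, h])
  exact ⟨_, w, hw⟩

def Good (L : LGraph (Fin 2)) (S : Set ℕ) (u : L.G.V) : Prop :=
  ∀ l : List ℕ, (∀ a ∈ l, a ∈ S) → ∃ w, HopL L l u w

theorem exists_good {S : Set ℕ} (hr : L.RightResolving) (hp : L.Presents (SGap S))
    {s : ℕ} (hs : s ∈ S) : ∃ u, Good L S u := by
  by_contra hcon
  have hbad : ∀ u, ∃ l : List ℕ, (∀ a ∈ l, a ∈ S) ∧ ¬ ∃ w, HopL L l u w := by
    intro u
    by_contra h
    apply hcon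
    refine ⟨u, fun l hl => ?_⟩
    by_contra h'
    exact h ⟨l, hl, h'⟩
  have key : ∀ W : Finset L.G.V, ∃ l : List ℕ, (∀ a ∈ l, a ∈ S) ∧
      ∀ u ∈ W, ¬ ∃ w, HopL L l u w := by
    classical
    intro W
    induction W using Finset.induction_on with
    | empty => exact ⟨[], by simp, by simp⟩
    | insert u W _ ih =>
      obtain ⟨l, hl, hW⟩ := ih
      by_cases hu : ∃ w, HopL L l u w
      · obtain ⟨w, hw⟩ := hu
        obtain ⟨l', hl', hw'⟩ := hbad w
        refine ⟨l ++ l', ?_, ?_⟩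
        · intro a ha
          rcases List.mem_append.1 ha with h | h
          · exact hl a h
          · exact hl' a h
        · rintro v hv ⟨z, hz⟩
          obtain ⟨m, h1, h2⟩ := hz.append
          rcases Finset.mem_insert.1 hv with rfl | hv
          · have := h1.det hr hw
            subst this
            exact hw' ⟨z, h2⟩
          · exact hW v hv ⟨m, h1⟩
      · refine ⟨l, hl, fun v hv => ?_⟩
        rcases Finset.mem_insert.1 hv with rfl | hv
        · exact hu
        · exact hW v hv
  obtain ⟨l, hl, h⟩ := key Finset.univ
  obtain ⟨u, w, hw⟩ := hopL_exists hp hs l hl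
  exact h u (Finset.mem_univ _) ⟨w, hw⟩

theorem Good.step {S : Set ℕ} (hr : L.RightResolving) {u v : L.G.V} (hu : Good L S u) {s : ℕ}
    (hs : s ∈ S) (h : Hop L s u v) : Good L S v := by
  intro l hl
  obtain ⟨w, m, h1, h2⟩ := hu (s :: l) (by
    intro a ha
    rcases List.mem_cons.1 ha with rfl | ha
    · exact hs
    · exact hl a ha)
  have := h.det hr h1
  subst this
  exact ⟨w, h2⟩

theorem Hop.last {k : ℕ} : ∀ {u v}, Hop L k u v → ∃ e, L.label e = 1 ∧ L.G.tgt e = v := by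
  induction k with
  | zero => rintro u v ⟨e, _, h⟩; exact ⟨e, h⟩
  | succ k ih => rintro u v ⟨e, _, _, h⟩; exact ih h

/-! ### Extending paths -/

theorem fw_exists (hout : ∀ v, ∃ e, L.G.src e = v) (u : L.G.V) :
    ∃ f : ℕ → L.G.E, L.G.src (f 0) = u ∧ ∀ n, L.G.tgt (f n) = L.G.src (f (n + 1)) := by
  choose c hc using hout
  let f : ℕ → L.G.E := fun n => Nat.rec (c u) (fun _ e => c (L.G.tgt e)) n
  exact ⟨f, hc u, fun n => (hc _).symm⟩

theorem bw_exists (hin : ∀ v, ∃ e, L.G.tgt e = v) (e : L.G.E) :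
    ∃ f : ℕ → L.G.E, f 0 = e ∧ ∀ n, L.G.tgt (f (n + 1)) = L.G.src (f n) := by
  choose c hc using hin
  let f : ℕ → L.G.E := fun n => Nat.rec e (fun _ e => c (L.G.src e)) n
  exact ⟨f, rfl, fun n => hc _⟩

theorem fw_hop (hout : ∀ v, ∃ e, L.G.src e = v) (k : ℕ) : ∀ u w, Hop L k u w →
    ∃ f : ℕ → L.G.E, L.G.src (f 0) = u ∧ (∀ n, L.G.tgt (f n) = L.G.src (f (n + 1))) ∧
      (∀ n < k, L.label (f n) = 0) ∧ L.label (f k) = 1 := by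
  induction k with
  | zero =>
    rintro u w ⟨e, h1, h2, h3⟩
    obtain ⟨f, hf0, hf⟩ := fw_exists hout w
    refine ⟨fun n => Nat.casesOn n e f, h1, ?_, by simp, h2⟩
    intro n
    cases n with
    | zero => exact h3.trans hf0.symm
    | succ n => exact hf n
  | succ k ih =>
    rintro u w ⟨e, h1, h2, h3⟩
    obtain ⟨f, hf0, hf, hfz, hfk⟩ := ih _ _ h3
    refine ⟨fun n => Nat.casesOn n e f, h1, ?_, ?_, hfk⟩
    · intro n
      cases n with
      | zero => exact hf0.symm
      | succ n => exact hf n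
    · intro n hn
      cases n with
      | zero => exact h2
      | succ n => exact hfz n (by omega)

theorem gap_mem {S : Set ℕ} (hp : L.Presents (SGap S))
    (hout : ∀ v, ∃ e, L.G.src e = v) (hin : ∀ v, ∃ e, L.G.tgt e = v)
    (e : L.G.E) (he : L.label e = 1) {k : ℕ} {w} (h : Hop L k (L.G.tgt e) w) : k ∈ S := by
  obtain ⟨f, hf0, hf, hfz, hfk⟩ := fw_hop hout k _ _ h
  obtain ⟨b, hb0, hb⟩ := bw_exists hin e
  let ξ : ℤ → L.G.E := fun i => Int.rec f b i
  have hξ : ξ ∈ L.G.edgeShift := by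
    intro i
    cases i with
    | ofNat n => exact hf n
    | negSucc n =>
      cases n with
      | zero =>
        show L.G.tgt (b 0) = L.G.src (f 0)
        rw [hb0, hf0]
      | succ n =>
        have : (Int.negSucc (n + 1) + 1) = Int.negSucc n := by omega
        rw [this]
        exact hb n
  have hx : (fun i => L.label (ξ i)) ∈ SGap S := by
    rw [hp]; exact ⟨ξ, hξ, fun i => rfl⟩
  have := hx.1 (-1) k (by omega) (by show L.label (b 0) = 1; rw [hb0]; exact he) hfk (by
    intro j hj1 hj2
    obtain ⟨n, rfl⟩ := Int.eq_ofNat_of_zero_le (a := j) (by omega)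
    exact hfz n (by omega))
  have e1 : ((k : ℤ) - (-1) - 1).toNat = k := by omega
  rwa [e1] at this

/-! ### Structure of the cover -/

theorem structure_thm {S : Set ℕ} (hi : L.G.Irreducible) (hr : L.RightResolving)
    (hp : L.Presents (SGap S)) {s : ℕ} (hs : s ∈ S) :
    (∃ e, L.label e = 1) ∧ (∀ e, L.label e = 1 → R L (L.G.tgt e) = S) ∧
    (∀ v, (R L v).Nonempty) ∧ (∀ v, ∃ i, ∀ k, k ∈ R L v ↔ k + i ∈ S) := by
  obtain ⟨u, hu⟩ := exists_good hr hp hs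
  obtain ⟨u0, m, hm, rfl⟩ := hu [s] (by simpa using hs)
  have hu0 : Good L S m := hu.step hr hs hm
  obtain ⟨e1, he1, rfl⟩ := hm.last
  have hout : ∀ v, ∃ e, L.G.src e = v := by
    intro v
    rcases (hi v (L.G.src e1)).cases_head with h | ⟨_, ⟨e, he, _⟩, _⟩
    · exact ⟨e1, h.symm⟩
    · exact ⟨e, he⟩
  have hin : ∀ v, ∃ e, L.G.tgt e = v := by
    intro v
    rcases (hi (L.G.tgt e1) v).cases_tail with h | ⟨_, _, ⟨e, _, he⟩⟩
    · exact ⟨e1, h.symm⟩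
    · exact ⟨e, he⟩
  have hRS : ∀ e, L.label e = 1 → Good L S (L.G.tgt e) → R L (L.G.tgt e) = S := by
    intro e he hg
    ext k
    constructor
    · rintro ⟨w, hw⟩; exact gap_mem hp hout hin e he hw
    · intro hk
      obtain ⟨w, m, hm, _⟩ := hg [k] (by simpa using hk)
      exact ⟨m, hm⟩
  have hstep : ∀ e i, L.label e = 1 → (∃ f, L.label f = 1 ∧ Good L S (L.G.tgt f) ∧
      Zr L i (L.G.tgt f) (L.G.src e)) → Good L S (L.G.tgt e) := by
    rintro e i he ⟨f, hf, hg, hz⟩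
    have hh : Hop L 0 (L.G.src e) (L.G.tgt e) := ⟨e, rfl, he, rfl⟩
    have h2 := hz.hop hh
    exact hg.step hr (gap_mem hp hout hin f hf h2) h2
  have hinv : ∀ v, ∃ i f, L.label f = 1 ∧ Good L S (L.G.tgt f) ∧ Zr L i (L.G.tgt f) v := by
    intro v
    induction hi (L.G.tgt e1) v with
    | refl => exact ⟨0, e1, he1, hu0, rfl⟩
    | tail _ h ih =>
      obtain ⟨e, rfl, rfl⟩ := h
      obtain ⟨i, hf⟩ := ih
      rcases fin2 (L.label e) with he | he
      · obtain ⟨f, hf1, hf2, hf3⟩ := hf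
        exact ⟨i + 1, f, hf1, hf2, hf3.snoc e rfl he⟩
      · exact ⟨0, e, he, hstep e i he hf, rfl⟩
  refine ⟨⟨e1, he1⟩, ?_, ?_, ?_⟩
  · intro e he
    obtain ⟨i, hf⟩ := hinv (L.G.src e)
    exact hRS e he (hstep e i he hf)
  · intro v
    induction hi v (L.G.src e1) using Relation.ReflTransGen.head_induction_on with
    | refl => exact ⟨0, (zero_mem_R _).2 ⟨e1, rfl, he1⟩⟩
    | head h _ ih =>
      obtain ⟨e, rfl, rfl⟩ := h
      rcases fin2 (L.label e) with he | he
      · obtain ⟨k, hk⟩ := ih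
        exact ⟨k + 1, (R_tgt hr e he k).1 hk⟩
      · exact ⟨0, (zero_mem_R _).2 ⟨e, rfl, he⟩⟩
  · intro v
    obtain ⟨i, f, hf, hg, hz⟩ := hinv v
    refine ⟨i, fun k => ?_⟩
    rw [← hRS f hf hg]
    constructor
    · rintro ⟨w, hw⟩; exact ⟨w, hz.hop hw⟩
    · rintro ⟨w, hw⟩; exact ⟨w, hz.hop_inv hr hw⟩

theorem sgap_empty : SGap ∅ = ∅ := by
  ext x
  simp only [Set.mem_empty_iff_false, iff_false]
  rintro ⟨h1, h2⟩
  obtain ⟨hf, -⟩ := h2 Set.finite_empty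
  obtain ⟨i, -, hi⟩ := hf 0
  obtain ⟨j, hj, hj1⟩ := hf (i + 1)
  have hex : ∃ n : ℕ, x (i + 1 + n) = 1 := ⟨(j - (i + 1)).toNat, by
    have : i + 1 + ((j - (i + 1)).toNat : ℤ) = j := by omega
    rw [this]; exact hj1⟩
  classical
  have hs := Nat.find_spec hex
  refine h1 i _ (by omega) hi hs ?_
  intro k hk1 hk2
  rcases fin2 (x k) with h | h
  · exact h
  · exfalso
    refine Nat.find_min hex (m := (k - (i + 1)).toNat) (by omega) ?_
    have : i + 1 + ((k - (i + 1)).toNat : ℤ) = k := by omega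
    rw [this]; exact h

/-- Minimality implies that `R` is injective on the vertices. -/
theorem R_injective {S : Set ℕ} (hF : IsFischerCover L (SGap S)) {s : ℕ} (hs : s ∈ S) :
    Function.Injective (R L) := by
  classical
  obtain ⟨hi, hr, hp, hmin⟩ := hF
  obtain ⟨-, h1, hne, hsh⟩ := structure_thm hi hr hp hs
  let r : L.G.V → L.G.V := fun v => (⟨v, rfl⟩ : ∃ w, R L w = R L v).choose
  have hrR : ∀ v, R L (r v) = R L v := fun v => (⟨v, rfl⟩ : ∃ w, R L w = R L v).choose_spec
  have hreq : ∀ v w, R L v = R L w → r v = r w := by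
    intro v w h
    simp only [r]
    congr 1
    ext z; rw [h]
  let H : LGraph (Fin 2) :=
    { G := { V := Set.range (R L), E := { e : L.G.E // L.G.src e = r (L.G.src e) },
             src := fun e => ⟨R L (L.G.src e.1), _, rfl⟩
             tgt := fun e => ⟨R L (L.G.tgt e.1), _, rfl⟩ }
      label := fun e => L.label e.1 }
  have hHr : H.RightResolving := by
    rintro ⟨e, he⟩ ⟨f, hf⟩ h h'
    have h2 : R L (L.G.src e) = R L (L.G.src f) := congrArg Subtype.val h
    have h3 : L.G.src e = L.G.src f := by rw [he, hf]; exact hreq _ _ h2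
    exact Subtype.ext (hr e f h3 h')
  have hedge : ∀ e : L.G.E, ∃ f : { e : L.G.E // L.G.src e = r (L.G.src e) },
      L.label f.1 = L.label e ∧ R L (L.G.src f.1) = R L (L.G.src e) ∧
      R L (L.G.tgt f.1) = R L (L.G.tgt e) := by
    intro e
    have hidem : r (r (L.G.src e)) = r (L.G.src e) := hreq _ _ (hrR _)
    rcases fin2 (L.label e) with he | he
    · obtain ⟨k, hk⟩ := hne (L.G.tgt e)
      have hk2 := (R_tgt hr e he k).1 hk
      rw [← hrR] at hk2
      obtain ⟨w, f, hf1, hf2, hf3⟩ := hk2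
      refine ⟨⟨f, by rw [hf1, hidem]⟩, hf2.trans he.symm, ?_, ?_⟩
      · rw [hf1, hrR]
      · ext n
        rw [R_tgt hr f hf2, R_tgt hr e he, hf1, hrR]
    · have h0 := (zero_mem_R (L.G.src e)).2 ⟨e, rfl, he⟩
      rw [← hrR] at h0
      obtain ⟨f, hf1, hf2⟩ := (zero_mem_R _).1 h0
      refine ⟨⟨f, by rw [hf1, hidem]⟩, hf2.trans he.symm, ?_, ?_⟩
      · rw [hf1, hrR]
      · rw [h1 f hf2, h1 e he]
  have hHp : H.Presents (SGap S) := by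
    ext x
    constructor
    · intro hx
      rw [hp] at hx
      obtain ⟨ξ, hξ, hl⟩ := hx
      choose F hF1 hF2 hF3 using hedge
      refine ⟨fun i => F (ξ i), fun i => Subtype.ext ?_, fun i => (hF1 _).trans (hl i)⟩
      show R L (L.G.tgt (F (ξ i)).1) = R L (L.G.src (F (ξ (i + 1))).1)
      rw [hF3, hF2, hξ i]
    · rintro ⟨η, hη, hl⟩
      have hη' : ∀ i, R L (L.G.tgt (η i).1) = R L (L.G.src (η (i + 1)).1) :=
        fun i => congrArg Subtype.val (hη i)
      have hl' : ∀ i, L.label (η i).1 = x i := hl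
      have hz : ∀ (n : ℕ) (i : ℤ), (∀ m : ℕ, m < n → x (i + m) = 0) →
          ∀ k, k ∈ R L (L.G.src (η (i + n)).1) ↔ k + n ∈ R L (L.G.src (η i).1) := by
        intro n
        induction n with
        | zero => intro i _ k; simp
        | succ n ih =>
          intro i h k
          have e1 : i + ((n + 1 : ℕ) : ℤ) = (i + n) + 1 := by push_cast; ring
          rw [e1, ← hη', R_tgt hr _ ((hl' _).trans (h n (by omega))),
            ih i (fun m hm => h m (by omega))]
          rw [add_assoc, add_comm 1 n]
      refine ⟨?_, fun hfin => ?_⟩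
      · intro i j hij hxi hxj hk
        have e1 : j = (i + 1) + ((j - i - 1).toNat : ℕ) := by omega
        have h0 : 0 ∈ R L (L.G.src (η j).1) := (zero_mem_R _).2 ⟨_, rfl, (hl' j).trans hxj⟩
        rw [e1, hz _ _ (fun m hm => hk _ (by omega) (by omega)), ← hη',
          h1 _ ((hl' i).trans hxi), zero_add] at h0
        exact h0
      · obtain ⟨M, hM⟩ := hfin.bddAbove
        constructor
        · intro N
          by_contra hcon
          have hzero : ∀ i ≥ N, x i = 0 := fun i hi => by
            rcases fin2 (x i) with h | h
            · exact h
            · exact absurd ⟨i, hi, h⟩ hcon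
          obtain ⟨k, hk⟩ := hne (L.G.src (η (N + (M + 1 : ℕ))).1)
          rw [hz _ _ (fun m _ => hzero _ (by omega))] at hk
          obtain ⟨i, hi⟩ := hsh (L.G.src (η N).1)
          have := hM ((hi _).1 hk)
          omega
        · intro N
          by_contra hcon
          have hzero : ∀ i ≤ N, x i = 0 := fun i hi => by
            rcases fin2 (x i) with h | h
            · exact h
            · exact absurd ⟨i, hi, h⟩ hcon
          obtain ⟨k, hk⟩ := hne (L.G.src (η (N - (M + 1 : ℕ) + (M + 1 : ℕ))).1)
          rw [hz _ _ (fun m _ => hzero _ (by omega))] at hk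
          obtain ⟨i, hi⟩ := hsh (L.G.src (η (N - (M + 1 : ℕ))).1)
          have := hM ((hi _).1 hk)
          omega
  have hcard := hmin H hHr hHp
  have hsurj : Function.Surjective (Set.rangeFactorization (R L)) :=
    Set.rangeFactorization_surjective
  have hbij : Function.Bijective (Set.rangeFactorization (R L)) := by
    have h2 := Fintype.card_le_of_surjective _ hsurj
    rw [Fintype.bijective_iff_surjective_and_card]
    refine ⟨hsurj, ?_⟩
    apply le_antisymm
    · convert hcard
    · exact h2
  intro v w h
  exact hbij.1 (Subtype.ext h)

/-! ### The successor map and the refinement relations -/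

open scoped Classical in
noncomputable def nxt (L : LGraph (Fin 2)) (v0 v : L.G.V) : L.G.V :=
  if h : ∃ e, L.G.src e = v ∧ L.label e = 0 then L.G.tgt h.choose else v0

theorem nxt_edge (hr : L.RightResolving) (v0 : L.G.V) (e : L.G.E) (he : L.label e = 0) :
    nxt L v0 (L.G.src e) = L.G.tgt e := by
  have h : ∃ f, L.G.src f = L.G.src e ∧ L.label f = 0 := ⟨e, rfl, he⟩
  unfold nxt
  rw [dif_pos h]
  congr 1
  exact hr _ _ h.choose_spec.1 (h.choose_spec.2.trans he.symm)

open scoped Classical in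
noncomputable def dd (L : LGraph (Fin 2)) (v : L.G.V) : ℕ :=
  if (∃ e, L.G.src e = v ∧ L.label e = 0) ∧ (∃ e, L.G.src e = v ∧ L.label e = 1) then 1 else 0

open scoped Classical in
theorem count (hr : L.RightResolving) (v0 : L.G.V)
    (h1 : ∀ e, L.label e = 1 → L.G.tgt e = v0) (hout : ∀ v, ∃ e, L.G.src e = v)
    (P : L.G.V → Prop) (v : L.G.V) :
    { e : L.G.E | L.G.src e = v ∧ P (L.G.tgt e) }.ncard =
      (if P (nxt L v0 v) then 1 else 0) + dd L v * (if P v0 then 1 else 0) := by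
  by_cases hz : ∃ e, L.G.src e = v ∧ L.label e = 0
  · obtain ⟨e0, rfl, he0⟩ := hz
    rw [nxt_edge hr v0 e0 he0]
    by_cases ho : ∃ e, L.G.src e = L.G.src e0 ∧ L.label e = 1
    · obtain ⟨e1, hs1, he1⟩ := ho
      have hd : dd L (L.G.src e0) = 1 := if_pos ⟨⟨e0, rfl, he0⟩, ⟨e1, hs1, he1⟩⟩
      have ht1 := h1 e1 he1
      have hne : e0 ≠ e1 := by
        rintro rfl
        rw [he0] at he1; exact absurd he1 (by decide)
      have hall : ∀ e, L.G.src e = L.G.src e0 ↔ e = e0 ∨ e = e1 := by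
        intro e
        constructor
        · intro h
          rcases fin2 (L.label e) with he | he
          · exact Or.inl (hr _ _ h (he.trans he0.symm))
          · exact Or.inr (hr _ _ (h.trans hs1.symm) (he.trans he1.symm))
        · rintro (rfl | rfl)
          · rfl
          · exact hs1
      rw [hd]
      by_cases hP0 : P (L.G.tgt e0) <;> by_cases hP1 : P v0
      · have : { e : L.G.E | L.G.src e = L.G.src e0 ∧ P (L.G.tgt e) } = {e0, e1} := by
          ext e; simp only [Set.mem_setOf_eq, hall, Set.mem_insert_iff, Set.mem_singleton_iff]
          constructor
          · exact fun h => h.1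
          · rintro (rfl | rfl)
            · exact ⟨Or.inl rfl, hP0⟩
            · exact ⟨Or.inr rfl, ht1 ▸ hP1⟩
        rw [this, Set.ncard_pair hne]; simp [hP0, hP1]
      · have : { e : L.G.E | L.G.src e = L.G.src e0 ∧ P (L.G.tgt e) } = {e0} := by
          ext e; simp only [Set.mem_setOf_eq, hall, Set.mem_singleton_iff]
          constructor
          · rintro ⟨rfl | rfl, h⟩
            · rfl
            · exact absurd (ht1 ▸ h) hP1
          · rintro rfl
            exact ⟨Or.inl rfl, hP0⟩
        rw [this, Set.ncard_singleton]; simp [hP0, hP1]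
      · have : { e : L.G.E | L.G.src e = L.G.src e0 ∧ P (L.G.tgt e) } = {e1} := by
          ext e; simp only [Set.mem_setOf_eq, hall, Set.mem_singleton_iff]
          constructor
          · rintro ⟨rfl | rfl, h⟩
            · exact absurd h hP0
            · rfl
          · rintro rfl
            exact ⟨Or.inr rfl, ht1 ▸ hP1⟩
        rw [this, Set.ncard_singleton]; simp [hP0, hP1]
      · have : { e : L.G.E | L.G.src e = L.G.src e0 ∧ P (L.G.tgt e) } = ∅ := by
          ext e; simp only [Set.mem_setOf_eq, hall, Set.mem_empty_iff_false, iff_false]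
          rintro ⟨rfl | rfl, h⟩
          · exact hP0 h
          · exact hP1 (ht1 ▸ h)
        rw [this, Set.ncard_empty]; simp [hP0, hP1]
    · have hd : dd L (L.G.src e0) = 0 := if_neg fun h => ho h.2
      have hall : ∀ e, L.G.src e = L.G.src e0 ↔ e = e0 := by
        intro e
        constructor
        · intro h
          rcases fin2 (L.label e) with he | he
          · exact hr _ _ h (he.trans he0.symm)
          · exact absurd ⟨e, h, he⟩ ho
        · rintro rfl; rfl
      rw [hd]
      by_cases hP0 : P (L.G.tgt e0)
      · have : { e : L.G.E | L.G.src e = L.G.src e0 ∧ P (L.G.tgt e) } = {e0} := by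
          ext e; simp only [Set.mem_setOf_eq, hall, Set.mem_singleton_iff]
          exact ⟨fun h => h.1, by rintro rfl; exact ⟨rfl, hP0⟩⟩
        rw [this, Set.ncard_singleton]; simp [hP0]
      · have : { e : L.G.E | L.G.src e = L.G.src e0 ∧ P (L.G.tgt e) } = ∅ := by
          ext e; simp only [Set.mem_setOf_eq, hall, Set.mem_empty_iff_false, iff_false]
          rintro ⟨rfl, h⟩
          exact hP0 h
        rw [this, Set.ncard_empty]; simp [hP0]
  · have hd : dd L v = 0 := if_neg fun h => hz h.1
    have hn : nxt L v0 v = v0 := dif_neg hz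
    obtain ⟨e1, rfl⟩ := hout v
    have hlab : ∀ e, L.G.src e = L.G.src e1 → L.label e = 1 := by
      intro e he
      rcases fin2 (L.label e) with h | h
      · exact absurd ⟨e, he, h⟩ hz
      · exact h
    have hall : ∀ e, L.G.src e = L.G.src e1 ↔ e = e1 := by
      intro e
      exact ⟨fun h => hr _ _ h ((hlab e h).trans (hlab e1 rfl).symm), by rintro rfl; rfl⟩
    have ht1 := h1 e1 (hlab e1 rfl)
    rw [hd, hn]
    by_cases hP0 : P v0
    · have : { e : L.G.E | L.G.src e = L.G.src e1 ∧ P (L.G.tgt e) } = {e1} := by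
        ext e; simp only [Set.mem_setOf_eq, hall, Set.mem_singleton_iff]
        exact ⟨fun h => h.1, by rintro rfl; exact ⟨rfl, ht1 ▸ hP0⟩⟩
      rw [this, Set.ncard_singleton]; simp [hP0]
    · have : { e : L.G.E | L.G.src e = L.G.src e1 ∧ P (L.G.tgt e) } = ∅ := by
        ext e; simp only [Set.mem_setOf_eq, hall, Set.mem_empty_iff_false, iff_false]
        rintro ⟨rfl, h⟩
        exact hP0 (ht1 ▸ h)
      rw [this, Set.ncard_empty]; simp [hP0]

theorem simRel_refl (G : FinGraph) (n : ℕ) (I : G.V) : simRel G n I I := by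
  cases n with
  | zero => trivial
  | succ n => intro K; rfl

theorem simLim_symm {G : FinGraph} {I J : G.V} (h : simLim G I J) : simLim G J I := by
  intro n
  cases n with
  | zero => trivial
  | succ n => intro K; exact (h (n + 1) K).symm

theorem simLim_dd (hr : L.RightResolving) (v0 : L.G.V)
    (h1 : ∀ e, L.label e = 1 → L.G.tgt e = v0) (hout : ∀ v, ∃ e, L.G.src e = v)
    {I J : L.G.V} (h : simLim L.G I J) : dd L I = dd L J := by
  have h2 := h 1 I
  simp only [simRel] at h2
  have a := count hr v0 h1 hout (fun _ => True) I
  have b := count hr v0 h1 hout (fun _ => True) J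
  simp only [if_true] at a b
  omega

theorem simLim_nxt (hr : L.RightResolving) (v0 : L.G.V)
    (h1 : ∀ e, L.label e = 1 → L.G.tgt e = v0) (hout : ∀ v, ∃ e, L.G.src e = v)
    {I J : L.G.V} (h : simLim L.G I J) : simLim L.G (nxt L v0 I) (nxt L v0 J) := by
  classical
  apply simLim_symm
  intro n
  have h2 := h (n + 1) (nxt L v0 I)
  rw [count hr v0 h1 hout (fun z => simRel L.G n z (nxt L v0 I)) I,
    count hr v0 h1 hout (fun z => simRel L.G n z (nxt L v0 I)) J,
    simLim_dd hr v0 h1 hout h, if_pos (simRel_refl _ _ _)] at h2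
  by_contra hcon
  rw [if_neg hcon] at h2
  omega

end SGapProof

/-- If `X(S)` is sofic with Fischer cover `𝒢 = (G, ℒ)`, then every
state of `M_G` (i.e., every class of the limiting partition of the vertices of `G`)
contains the same number of vertices of `G`. -/
theorem sgap_MG_states_same_card
    (S : Set ℕ) (hsofic : IsSofic (SGap S))
    (𝒢 : LGraph (Fin 2)) (hF : IsFischerCover 𝒢 (SGap S)) :
    ∀ I J : 𝒢.G.V,
      { I' : 𝒢.G.V | simLim 𝒢.G I' I }.ncard = { J' : 𝒢.G.V | simLim 𝒢.G J' J }.ncard := by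
  classical
  intro I J
  rcases Set.eq_empty_or_nonempty S with rfl | ⟨s, hs⟩
  · exfalso
    let H : LGraph (Fin 2) :=
      { G := { V := Empty, E := Empty, src := id, tgt := id }, label := fun e => e.elim }
    have := hF.2.2.2 H (fun e => e.elim) (by
      unfold LGraph.Presents
      rw [SGapProof.sgap_empty]
      symm
      ext x
      simp only [Set.mem_empty_iff_false, iff_false]
      rintro ⟨ξ, _⟩
      exact (ξ 0).elim)
    have h0 : Fintype.card H.G.V = 0 := Fintype.card_eq_zero_iff.2 (inferInstanceAs (IsEmpty Empty))
    have h1 : 0 < Fintype.card 𝒢.G.V := Fintype.card_pos_iff.2 ⟨I⟩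
    omega
  have hinj := SGapProof.R_injective hF hs
  obtain ⟨hi, hr, hp, -⟩ := hF
  obtain ⟨⟨e1, he1⟩, hS, hne, hsh⟩ := SGapProof.structure_thm hi hr hp hs
  have hout : ∀ v, ∃ e, 𝒢.G.src e = v := by
    intro v
    obtain ⟨k, w, hk⟩ := hne v
    cases k with
    | zero => obtain ⟨e, he, _⟩ := hk; exact ⟨e, he⟩
    | succ k => obtain ⟨e, he, _⟩ := hk; exact ⟨e, he⟩
  let v0 := 𝒢.G.tgt e1
  have hv0 : SGapProof.R 𝒢 v0 = S := hS e1 he1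
  have h1 : ∀ e, 𝒢.label e = 1 → 𝒢.G.tgt e = v0 := fun e he =>
    hinj ((hS e he).trans hv0.symm)
  let nx := SGapProof.nxt 𝒢 v0
  have hnx : ∀ {A B}, simLim 𝒢.G A B → simLim 𝒢.G (nx A) (nx B) :=
    fun h => SGapProof.simLim_nxt hr v0 h1 hout h
  -- moving along `nx` shifts `R`
  have hRn : ∀ v k, k + 1 ∈ SGapProof.R 𝒢 v → ∀ m, m ∈ SGapProof.R 𝒢 (nx v) ↔
      m + 1 ∈ SGapProof.R 𝒢 v := by
    rintro v k ⟨w, e, rfl, he, -⟩ m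
    show m ∈ SGapProof.R 𝒢 (SGapProof.nxt 𝒢 v0 _) ↔ _
    rw [SGapProof.nxt_edge hr v0 e he]
    exact SGapProof.R_tgt hr e he m
  have hRi : ∀ (n : ℕ) v k, k + n ∈ SGapProof.R 𝒢 v → ∀ m, m ∈ SGapProof.R 𝒢 (nx^[n] v) ↔
      m + n ∈ SGapProof.R 𝒢 v := by
    intro n
    induction n with
    | zero => intro v k _ m; simp
    | succ n ih =>
      intro v k hk m
      have h2 := hRn v (k + n) hk
      rw [Function.iterate_succ_apply, ih (nx v) k ((h2 _).2 hk), h2]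
      rfl
  by_cases hfin : S.Finite
  · obtain ⟨M, hMS, hM⟩ : ∃ M ∈ S, ∀ a ∈ S, a ≤ M :=
      ⟨_, (hfin.exists_maximalFor id S ⟨s, hs⟩).choose_spec.1, by
        intro a ha
        have := (hfin.exists_maximalFor id S ⟨s, hs⟩).choose_spec.2 ha
        simp only [id] at this
        omega⟩
    -- description of `R v`
    have hRM : ∀ v, ∃ i, i ≤ M ∧ ∀ k, k ∈ SGapProof.R 𝒢 v ↔ k + i ∈ S := by
      intro v
      obtain ⟨i, h⟩ := hsh v
      obtain ⟨k, hk⟩ := hne v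
      have := hM _ ((h k).1 hk)
      exact ⟨i, by omega, h⟩
    have hreach : ∀ v, ∃ i, nx^[i] v0 = v := by
      intro v
      obtain ⟨i, hiM, h⟩ := hRM v
      refine ⟨i, hinj ?_⟩
      ext m
      rw [hRi i v0 (M - i) (by rw [hv0, Nat.sub_add_cancel hiM]; exact hMS), hv0, h]
    have hback : ∀ v, ∃ i, nx^[i] v = v0 := by
      intro v
      obtain ⟨i, hiM, h⟩ := hRM v
      have hk : 0 + (M - i) ∈ SGapProof.R 𝒢 v := by
        rw [h, zero_add, Nat.sub_add_cancel hiM]; exact hMS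
      refine ⟨(M - i) + 1, ?_⟩
      rw [Function.iterate_succ_apply']
      show SGapProof.nxt 𝒢 v0 _ = v0
      refine dif_neg ?_
      rintro ⟨e, he, he0⟩
      obtain ⟨k, hk'⟩ := hne (𝒢.G.tgt e)
      have h3 := (SGapProof.R_tgt hr e he0 k).1 hk'
      rw [he, hRi _ v 0 hk, h] at h3
      have := hM _ h3
      omega
    have hsurj : Function.Surjective nx := by
      intro v
      obtain ⟨i, hi⟩ := hreach v
      obtain ⟨j, hj⟩ := hback (nx v0)
      have hj' : nx^[j + 1] v0 = v0 := hj
      refine ⟨nx^[i + j] v0, ?_⟩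
      rw [← Function.iterate_succ_apply' nx]
      have : (i + j).succ = i + (j + 1) := by omega
      rw [this, Function.iterate_add_apply, hj', hi]
    have hninj : Function.Injective nx := Finite.injective_iff_surjective.2 hsurj
    have hle : ∀ (n : ℕ) A, { I' : 𝒢.G.V | simLim 𝒢.G I' A }.ncard ≤
        { I' : 𝒢.G.V | simLim 𝒢.G I' (nx^[n] A) }.ncard := by
      intro n
      induction n with
      | zero => intro A; exact le_refl _
      | succ n ih =>
        intro A
        rw [Function.iterate_succ_apply]
        refine le_trans ?_ (ih (nx A))
        exact Set.ncard_le_ncard_of_injOn nx (fun a ha => hnx ha) hninj.injOn (Set.toFinite _)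
    have hle2 : ∀ A B, { I' : 𝒢.G.V | simLim 𝒢.G I' A }.ncard ≤
        { I' : 𝒢.G.V | simLim 𝒢.G I' B }.ncard := by
      intro A B
      obtain ⟨i, hi⟩ := hback A
      obtain ⟨j, hj⟩ := hreach B
      have := hle (j + i) A
      rwa [Function.iterate_add_apply, hi, hj] at this
    exact le_antisymm (hle2 I J) (hle2 J I)
  · -- `S` infinite: every class is a singleton
    have hlarge : ∀ v n, ∃ k, k + n ∈ SGapProof.R 𝒢 v := by
      intro v n
      obtain ⟨i, h⟩ := hsh v
      obtain ⟨a, ha, hlt⟩ := (Set.not_finite.1 hfin).exists_gt (n + i)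
      refine ⟨a - (n + i), ?_⟩
      rw [h]
      have : a - (n + i) + n + i = a := by omega
      rw [this]; exact ha
    have hz : ∀ v, ∃ e, 𝒢.G.src e = v ∧ 𝒢.label e = 0 := by
      intro v
      obtain ⟨k, w, e, he, he0, -⟩ := hlarge v 1
      exact ⟨e, he, he0⟩
    have hdd : ∀ v, 0 ∈ SGapProof.R 𝒢 v ↔ SGapProof.dd 𝒢 v = 1 := by
      intro v
      rw [SGapProof.zero_mem_R]
      unfold SGapProof.dd
      constructor
      · intro h; rw [if_pos ⟨hz v, h⟩]
      · intro h
        by_contra h'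
        rw [if_neg (fun h'' => h' h''.2)] at h
        omega
    have hit : ∀ (n : ℕ) A B, simLim 𝒢.G A B → simLim 𝒢.G (nx^[n] A) (nx^[n] B) := by
      intro n
      induction n with
      | zero => intro A B h; exact h
      | succ n ih => intro A B h; exact ih _ _ (hnx h)
    have heq : ∀ A B, simLim 𝒢.G A B → A = B := by
      intro A B h
      apply hinj
      ext k
      obtain ⟨a, ha⟩ := hlarge A k
      obtain ⟨b, hb⟩ := hlarge B k
      have h2 := hRi k A a ha 0
      have h3 := hRi k B b hb 0
      rw [zero_add] at h2 h3
      rw [← h2, ← h3, hdd, hdd, SGapProof.simLim_dd hr v0 h1 hout (hit k A B h)]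
    have hone : ∀ A, { I' : 𝒢.G.V | simLim 𝒢.G I' A }.ncard = 1 := by
      intro A
      have : { I' : 𝒢.G.V | simLim 𝒢.G I' A } = {A} := by
        ext B
        simp only [Set.mem_setOf_eq, Set.mem_singleton_iff]
        exact ⟨heq B A, by rintro rfl; exact fun n => SGapProof.simRel_refl _ _ _⟩
      rw [this, Set.ncard_singleton]
    rw [hone, hone]
end

section
/- If X and Y are irreducible sofic shifts with Fischer covers 𝒢_X = (G_X, ℒ_X) and 𝒢_Y = (G_Y, ℒ_Y) such that the underlying graphs G_X and G_Y are graph isomorphic, then X and Y are right-resolving almost conjugate; a common SFT extension is the edge shift X_{G_X} with legs (ℒ_X)_∞ and (ℒ_Y)_∞ composed with the graph isomorphism. -/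
namespace FischerAux

/-- `J` is reached from `I` along a path labeled `w`. -/
def Reach {A : Type} (𝒢 : LGraph A) : 𝒢.G.V → List A → 𝒢.G.V → Prop
  | I, [], J => I = J
  | I, a :: w, J => ∃ e, 𝒢.G.src e = I ∧ 𝒢.label e = a ∧ Reach 𝒢 (𝒢.G.tgt e) w J

theorem reach_append {A : Type} (𝒢 : LGraph A) (u v : List A) (I K : 𝒢.G.V) :
    Reach 𝒢 I (u ++ v) K ↔ ∃ J, Reach 𝒢 I u J ∧ Reach 𝒢 J v K := by
  induction u generalizing I with
  | nil => simp [Reach]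
  | cons a u ih =>
    simp only [List.cons_append, Reach, ih]
    constructor
    · rintro ⟨e, h1, h2, J, h3, h4⟩
      exact ⟨J, ⟨e, h1, h2, h3⟩, h4⟩
    · rintro ⟨J, ⟨e, h1, h2, h3⟩, h4⟩
      exact ⟨e, h1, h2, J, h3, h4⟩

theorem reach_det {A : Type} {𝒢 : LGraph A} (hR : 𝒢.RightResolving) (w : List A)
    (I J K : 𝒢.G.V) (h1 : Reach 𝒢 I w J) (h2 : Reach 𝒢 I w K) : J = K := by
  induction w generalizing I with
  | nil => exact h1.symm.trans h2
  | cons a w ih =>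
    obtain ⟨e, he, hl, h⟩ := h1
    obtain ⟨f, hf, hl', h'⟩ := h2
    have : e = f := hR e f (he.trans hf.symm) (hl.trans hl'.symm)
    subst this
    exact ih _ h h'

/-- Follower set. -/
def Fol {A : Type} (𝒢 : LGraph A) (I : 𝒢.G.V) : Set (List A) := {w | ∃ J, Reach 𝒢 I w J}

theorem fol_tgt {A : Type} {𝒢 : LGraph A} (hR : 𝒢.RightResolving) (e : 𝒢.G.E) (w : List A) :
    w ∈ Fol 𝒢 (𝒢.G.tgt e) ↔ (𝒢.label e :: w) ∈ Fol 𝒢 (𝒢.G.src e) := by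
  constructor
  · rintro ⟨J, h⟩
    exact ⟨J, e, rfl, rfl, h⟩
  · rintro ⟨J, f, h1, h2, h3⟩
    have : f = e := hR f e h1 h2
    subst this
    exact ⟨J, h3⟩

/-- transfer an edge along equality of follower sets -/
theorem fol_step {A : Type} {𝒢 : LGraph A} (hR : 𝒢.RightResolving) (e : 𝒢.G.E) (I : 𝒢.G.V)
    (h : Fol 𝒢 I = Fol 𝒢 (𝒢.G.src e)) :
    ∃ f, 𝒢.G.src f = I ∧ 𝒢.label f = 𝒢.label e ∧ Fol 𝒢 (𝒢.G.tgt f) = Fol 𝒢 (𝒢.G.tgt e) := by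
  have h0 : [𝒢.label e] ∈ Fol 𝒢 I := by
    rw [h]; exact ⟨_, e, rfl, rfl, rfl⟩
  obtain ⟨J, f, hf, hl, -⟩ := h0
  refine ⟨f, hf, hl, ?_⟩
  ext w
  rw [fol_tgt hR, fol_tgt hR, hf, hl, h]

theorem compact_lift {A : Type} (𝒢 : LGraph A) (x : ℤ → A)
    (h : ∀ n : ℕ, ∃ ξ : ℤ → 𝒢.G.E, ∀ i : ℤ, -(n : ℤ) ≤ i →
      𝒢.G.tgt (ξ i) = 𝒢.G.src (ξ (i + 1)) ∧ 𝒢.label (ξ i) = x i) :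
    ∃ ξ ∈ 𝒢.G.edgeShift, ∀ i : ℤ, 𝒢.label (ξ i) = x i := by
  letI : TopologicalSpace 𝒢.G.E := ⊥
  haveI : DiscreteTopology 𝒢.G.E := ⟨rfl⟩
  let K : ℕ → Set (ℤ → 𝒢.G.E) := fun n => {ξ | ∀ i : ℤ, -(n : ℤ) ≤ i →
      𝒢.G.tgt (ξ i) = 𝒢.G.src (ξ (i + 1)) ∧ 𝒢.label (ξ i) = x i}
  have hcl : ∀ n, IsClosed (K n) := by
    intro n
    have : K n = ⋂ i : ℤ, ⋂ _ : -(n : ℤ) ≤ i,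
        (fun ξ : ℤ → 𝒢.G.E => (ξ i, ξ (i + 1))) ⁻¹'
          {p | 𝒢.G.tgt p.1 = 𝒢.G.src p.2 ∧ 𝒢.label p.1 = x i} := by
      ext ξ; simp [K]
    rw [this]
    refine isClosed_iInter fun i => isClosed_iInter fun _ => ?_
    exact (isClosed_discrete _).preimage (by fun_prop)
  have hne := IsCompact.nonempty_iInter_of_sequence_nonempty_isCompact_isClosed K
    (fun n ξ hξ i hi => hξ i (by push_cast; omega)) (fun n => h n) (hcl 0).isCompact hcl
  obtain ⟨ξ, hξ⟩ := hne
  have hk : ∀ i : ℤ, 𝒢.G.tgt (ξ i) = 𝒢.G.src (ξ (i + 1)) ∧ 𝒢.label (ξ i) = x i := by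
    intro i
    exact Set.mem_iInter.1 hξ (i.natAbs) i (by omega)
  exact ⟨ξ, fun i => (hk i).1, fun i => (hk i).2⟩

open Classical in
/-- minimality implies follower separation -/
theorem fol_inj {A : Type} {𝒢 : LGraph A} {X : Set (ℤ → A)} (hF : IsFischerCover 𝒢 X) :
    Function.Injective (Fol 𝒢) := by
  obtain ⟨-, hR, hP, hmin⟩ := hF
  by_contra hni
  -- canonical representatives
  let r : 𝒢.G.V → 𝒢.G.V := fun I =>
    Classical.choose (⟨I, rfl⟩ : ∃ J, Fol 𝒢 J = Fol 𝒢 I)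
  have hr : ∀ I, Fol 𝒢 (r I) = Fol 𝒢 I := fun I =>
    Classical.choose_spec (⟨I, rfl⟩ : ∃ J, Fol 𝒢 J = Fol 𝒢 I)
  have hr2 : ∀ I J, Fol 𝒢 I = Fol 𝒢 J → r I = r J := by
    intro I J h
    simp only [r, h]
  let H : LGraph A :=
    { G := { V := {v : 𝒢.G.V // v ∈ Set.range r}
             E := {e : 𝒢.G.E // 𝒢.G.src e ∈ Set.range r}
             src := fun e => ⟨𝒢.G.src e.1, e.2⟩
             tgt := fun e => ⟨r (𝒢.G.tgt e.1), ⟨_, rfl⟩⟩ }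
      label := fun e => 𝒢.label e.1 }
  have hHR : H.RightResolving := by
    intro e f h1 h2
    exact Subtype.ext (hR _ _ (congrArg Subtype.val h1) h2)
  have hHP : H.Presents X := by
    unfold LGraph.Presents
    rw [hP]
    ext x
    constructor
    · rintro ⟨ξ, hξ, hx⟩
      have hs := fun i => fol_step hR (ξ i) (r (𝒢.G.src (ξ i))) (hr _)
      choose f hf1 hf2 hf3 using hs
      refine ⟨fun i => ⟨f i, _, (hf1 i).symm⟩, ?_, fun i => (hf2 i).trans (hx i)⟩
      intro i
      apply Subtype.ext
      change r (𝒢.G.tgt (f i)) = 𝒢.G.src (f (i + 1))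
      rw [hf1, ← hξ i]
      exact hr2 _ _ (hf3 i)
    · rintro ⟨η, hη, hx⟩
      have hη' : ∀ i, r (𝒢.G.tgt (η i).1) = 𝒢.G.src (η (i + 1)).1 := fun i =>
        congrArg Subtype.val (hη i)
      apply compact_lift
      intro n
      -- follow from position `-n`
      have hstep : ∀ (k : ℕ) (e : 𝒢.G.E),
          Fol 𝒢 (𝒢.G.src e) = Fol 𝒢 (𝒢.G.src (η (-(n : ℤ) + k)).1) →
          𝒢.label e = x (-(n : ℤ) + k) → ∃ f : 𝒢.G.E, 𝒢.G.tgt e = 𝒢.G.src f ∧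
          Fol 𝒢 (𝒢.G.src f) = Fol 𝒢 (𝒢.G.src (η (-(n : ℤ) + (k + 1 : ℕ))).1) ∧
          𝒢.label f = x (-(n : ℤ) + (k + 1 : ℕ)) := by
        intro k e h1 h2
        have h3 : Fol 𝒢 (𝒢.G.tgt e) = Fol 𝒢 (𝒢.G.src (η (-(n : ℤ) + (k + 1 : ℕ))).1) := by
          have e1 : (-(n : ℤ) + (k + 1 : ℕ)) = (-(n : ℤ) + k) + 1 := by push_cast; ring
          rw [e1, ← hη', hr]
          ext w
          have e2 : 𝒢.label e = 𝒢.label (η (-(n : ℤ) + k)).1 := h2.trans (hx _).symm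
          rw [fol_tgt hR, fol_tgt hR, h1, e2]
        obtain ⟨f, hf1, hf2, -⟩ := fol_step hR _ _ h3
        exact ⟨f, hf1.symm, by rw [hf1, h3], hf2.trans (hx _)⟩
      let S : ℕ → Type := fun k => {e : 𝒢.G.E //
        Fol 𝒢 (𝒢.G.src e) = Fol 𝒢 (𝒢.G.src (η (-(n : ℤ) + k)).1) ∧
          𝒢.label e = x (-(n : ℤ) + k)}
      let ρ : (k : ℕ) → S k := fun k => Nat.rec (motive := S)
        ⟨(η (-(n : ℤ) + (0 : ℕ))).1, rfl, hx _⟩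
        (fun k s => ⟨Classical.choose (hstep k s.1 s.2.1 s.2.2),
          (Classical.choose_spec (hstep k s.1 s.2.1 s.2.2)).2⟩) k
      have hρ : ∀ k, 𝒢.G.tgt (ρ k).1 = 𝒢.G.src (ρ (k + 1)).1 := fun k =>
        (Classical.choose_spec (hstep k (ρ k).1 (ρ k).2.1 (ρ k).2.2)).1
      obtain ⟨σ, hσ1, hσ2⟩ : ∃ σ : ℕ → 𝒢.G.E, (∀ k, 𝒢.G.tgt (σ k) = 𝒢.G.src (σ (k + 1))) ∧
          ∀ k : ℕ, 𝒢.label (σ k) = x (-(n : ℤ) + k) :=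
        ⟨fun k => (ρ k).1, hρ, fun k => (ρ k).2.2⟩
      refine ⟨fun i => σ (i + n).toNat, fun i hi => ?_⟩
      obtain ⟨k, rfl⟩ : ∃ k : ℕ, i = -(n : ℤ) + k := ⟨(i + n).toNat, by omega⟩
      have e1 : (-(n : ℤ) + k + n).toNat = k := by omega
      have e2 : (-(n : ℤ) + k + 1 + n).toNat = k + 1 := by omega
      simp only [e1, e2]
      exact ⟨hσ1 k, hσ2 k⟩
  have hcard := hmin H hHR hHP
  have hlt : Fintype.card H.G.V < Fintype.card 𝒢.G.V := by
    have h1 : ∃ v, v ∉ Set.range r := by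
      by_contra hcon
      push Not at hcon
      have hs : Function.Surjective r := hcon
      have hi : Function.Injective r := Finite.injective_iff_surjective.2 hs
      exact hni fun I J h => hi (hr2 I J h)
    obtain ⟨v, hv⟩ := h1
    have := Fintype.card_subtype_lt (p := fun v => v ∈ Set.range r) hv
    rw [← Nat.card_eq_fintype_card] at this ⊢
    exact this
  omega

/-- a synchronizing word on the level of paths -/
theorem exists_sync {A : Type} {𝒢 : LGraph A} (hR : 𝒢.RightResolving)
    (hinj : Function.Injective (Fol 𝒢)) (I₀ : 𝒢.G.V) :
    ∃ w : List A, (∃ I J, Reach 𝒢 I w J) ∧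
      ∀ I J I' J', Reach 𝒢 I w J → Reach 𝒢 I' w J' → J = J' := by
  let T : List A → Set 𝒢.G.V := fun w => {J | ∃ I, Reach 𝒢 I w J}
  have hex : ∃ n : ℕ, ∃ w, (T w).Nonempty ∧ (T w).ncard = n :=
    ⟨_, [], ⟨I₀, I₀, rfl⟩, rfl⟩
  classical
  obtain ⟨w, hw, hn⟩ := Nat.find_spec hex
  have hmin : ∀ w', (T w').Nonempty → (T w).ncard ≤ (T w').ncard := fun w' h => by
    rw [hn]; exact Nat.find_min' hex ⟨w', h, rfl⟩
  obtain ⟨J₀, I₁, h₀⟩ := hw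
  refine ⟨w, ⟨I₁, J₀, h₀⟩, ?_⟩
  -- the key asymmetric claim
  have key : ∀ J ∈ T w, ∀ J' ∈ T w, Fol 𝒢 J ⊆ Fol 𝒢 J' := by
    intro J hJ J' hJ' u hu
    by_contra hu'
    obtain ⟨L, hL⟩ := hu
    obtain ⟨I, hI⟩ := hJ
    have h1 : (T (w ++ u)).Nonempty := ⟨L, I, (reach_append _ _ _ _ _).2 ⟨J, hI, hL⟩⟩
    have h2 := hmin _ h1
    -- each element of T (w ++ u) comes from an element of T w \ {J'}
    have h3 : ∀ K ∈ T (w ++ u), ∃ M ∈ T w \ {J'}, Reach 𝒢 M u K := by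
      rintro K ⟨I', h⟩
      obtain ⟨M, hM, hMK⟩ := (reach_append _ _ _ _ _).1 h
      refine ⟨M, ⟨⟨I', hM⟩, ?_⟩, hMK⟩
      rintro rfl
      exact hu' ⟨K, hMK⟩
    choose! g hg1 hg2 using h3
    have h4 : (T (w ++ u)).ncard ≤ (T w \ {J'}).ncard := by
      refine Set.ncard_le_ncard_of_injOn g hg1 ?_ (Set.toFinite _)
      intro K hK K' hK' hgg
      have a := hg2 K hK
      rw [hgg] at a
      exact reach_det hR _ _ _ _ a (hg2 K' hK')
    have h5 : (T w \ {J'}).ncard < (T w).ncard :=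
      Set.ncard_diff_singleton_lt_of_mem hJ' (Set.toFinite _)
    omega
  intro I J I' J' h h'
  exact hinj (Set.Subset.antisymm (key J ⟨I, h⟩ J' ⟨I', h'⟩) (key J' ⟨I', h'⟩ J ⟨I, h⟩))

theorem exists_out {G : FinGraph} (hI : G.Irreducible) (e₀ : G.E) (v : G.V) :
    ∃ e, G.src e = v := by
  rcases Relation.ReflTransGen.cases_head (hI v (G.src e₀)) with h | ⟨c, ⟨e, he, -⟩, -⟩
  · exact ⟨e₀, h.symm⟩
  · exact ⟨e, he⟩

theorem exists_in {G : FinGraph} (hI : G.Irreducible) (e₀ : G.E) (v : G.V) :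
    ∃ e, G.tgt e = v := by
  rcases Relation.ReflTransGen.cases_tail (hI (G.tgt e₀) v) with h | ⟨c, -, ⟨e, -, he⟩⟩
  · exact ⟨e₀, h.symm⟩
  · exact ⟨e, he⟩

theorem right_ray {A : Type} {𝒢 : LGraph A} (nxt : 𝒢.G.V → 𝒢.G.E)
    (hn : ∀ v, 𝒢.G.src (nxt v) = v) (w : List A) (I J : 𝒢.G.V) (h : Reach 𝒢 I w J) :
    ∃ ρ : ℕ → 𝒢.G.E, 𝒢.G.src (ρ 0) = I ∧ (∀ k, 𝒢.G.tgt (ρ k) = 𝒢.G.src (ρ (k + 1))) ∧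
      ∀ (k : ℕ) (hk : k < w.length), 𝒢.label (ρ k) = w.get ⟨k, hk⟩ := by
  induction w generalizing I with
  | nil =>
    refine ⟨fun k => Nat.rec (nxt I) (fun _ e => nxt (𝒢.G.tgt e)) k, hn _, fun k => ?_, ?_⟩
    · exact (hn _).symm
    · intro k hk; simp at hk
  | cons a w ih =>
    obtain ⟨e, he, hl, h'⟩ := h
    obtain ⟨ρ, h0, h1, h2⟩ := ih _ h'
    refine ⟨fun k => Nat.casesOn k e ρ, he, ?_, ?_⟩
    · rintro (_ | k)
      · exact h0.symm
      · exact h1 k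
    · rintro (_ | k) hk
      · exact hl
      · exact h2 k (by simpa using hk)

theorem inLang_of_reach {A : Type} {𝒢 : LGraph A} {X : Set (ℤ → A)} (hP : 𝒢.Presents X)
    (hI : 𝒢.G.Irreducible) (e₀ : 𝒢.G.E) (w : List A) (I J : 𝒢.G.V) (h : Reach 𝒢 I w J) :
    InLang X w := by
  choose nxt hn using exists_out hI e₀
  choose prv hp using exists_in hI e₀
  obtain ⟨ρ, h0, h1, h2⟩ := right_ray nxt hn w I J h
  let l : ℕ → 𝒢.G.E := fun k => Nat.rec (prv I) (fun _ e => prv (𝒢.G.src e)) k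
  have hl0 : 𝒢.G.tgt (l 0) = I := hp _
  have hl : ∀ k, 𝒢.G.tgt (l (k + 1)) = 𝒢.G.src (l k) := fun k => hp _
  let ξ : ℤ → 𝒢.G.E := fun i => if 0 ≤ i then ρ i.toNat else l (-i - 1).toNat
  have hξ : ξ ∈ 𝒢.G.edgeShift := by
    intro i
    by_cases hi : 0 ≤ i
    · have e1 : (i + 1).toNat = i.toNat + 1 := by omega
      simp only [ξ, hi, if_true, show (0 : ℤ) ≤ i + 1 by omega, e1]
      exact h1 _
    · by_cases hi' : i = -1
      · subst hi'
        simpa [ξ, h0] using hl0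
      · have e1 : (-i - 1).toNat = (-(i + 1) - 1).toNat + 1 := by omega
        simp only [ξ, hi, if_false, show ¬ (0 : ℤ) ≤ i + 1 by omega, e1]
        exact hl _
  refine ⟨fun i => 𝒢.label (ξ i), ?_, 0, ?_⟩
  · rw [hP]; exact ⟨ξ, hξ, fun _ => rfl⟩
  · intro k hk
    simp only [ξ, zero_add, Int.natCast_nonneg, if_true, Int.toNat_natCast]
    exact h2 k hk

theorem reach_of_occurs {A : Type} {𝒢 : LGraph A} {ξ : ℤ → 𝒢.G.E} (hξ : ξ ∈ 𝒢.G.edgeShift)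
    (w : List A) (i : ℤ) (h : occursAt w (fun j => 𝒢.label (ξ j)) i) :
    Reach 𝒢 (𝒢.G.src (ξ i)) w (𝒢.G.src (ξ (i + w.length))) := by
  induction w generalizing i with
  | nil => simp [Reach]
  | cons a w ih =>
    refine ⟨ξ i, rfl, ?_, ?_⟩
    · simpa using h 0 (by simp)
    · rw [hξ i]
      have := ih (i + 1) (fun k hk => by
        have := h (k + 1) (by simpa using hk)
        simp only [List.get_eq_getElem, List.getElem_cons_succ] at this ⊢
        rw [← this]
        congr 2
        push_cast; ring)
      convert this using 3
      simp only [List.length_cons]; push_cast; ring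

theorem oneOne {A : Type} {𝒢 : LGraph A} {X : Set (ℤ → A)} (hF : IsFischerCover 𝒢 X) :
    OneOneAE 𝒢.G.edgeShift X (fun ξ i => 𝒢.label (ξ i)) := by
  have hinj := fol_inj hF
  obtain ⟨hI, hR, hP, -⟩ := hF
  intro y hy hdt
  have hy' := hy
  rw [hP] at hy'
  obtain ⟨ξ, hξ, hx⟩ := hy'
  refine ⟨ξ, ⟨hξ, funext hx⟩, ?_⟩
  rintro η ⟨hη, hηy⟩
  have hξy : (fun i => 𝒢.label (ξ i)) = y := funext hx
  obtain ⟨w, ⟨I, J, hIJ⟩, hs⟩ := exists_sync hR hinj (𝒢.G.src (ξ 0))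
  have hw := inLang_of_reach hP hI (ξ 0) w I J hIJ
  funext i
  obtain ⟨j, hj, hocc⟩ := (hdt w hw).2 (i - w.length)
  have a := reach_of_occurs hξ w j (by rw [hξy]; exact hocc)
  have b := reach_of_occurs hη w j (by
    have : (fun j => 𝒢.label (η j)) = y := hηy
    rw [this]; exact hocc)
  have hstart := hs _ _ _ _ b a
  have hlab : ∀ k, 𝒢.label (η k) = 𝒢.label (ξ k) := fun k =>
    (congrFun hηy k).trans (hx k).symm
  have hall : ∀ k, j + w.length ≤ k → 𝒢.G.src (η k) = 𝒢.G.src (ξ k) := by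
    intro k hk
    induction k, hk using Int.le_induction with
    | base => exact hstart
    | succ k hk ih =>
      rw [← hξ k, ← hη k, hR _ _ ih (hlab k)]
  exact hR _ _ (hall i (by omega)) (hlab i)

theorem edgeShift_sft (G : FinGraph) : IsSFT G.edgeShift := by
  classical
  refine ⟨((Finset.univ : Finset (G.E × G.E)).filter
    (fun p => G.tgt p.1 ≠ G.src p.2)).image (fun p => [p.1, p.2]), ?_⟩
  ext ξ
  constructor
  · rintro hξ w hw ⟨i, hi⟩
    simp only [Finset.mem_image, Finset.mem_filter, Finset.mem_univ, true_and] at hw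
    obtain ⟨⟨a, b⟩, hab, rfl⟩ := hw
    have h0 := hi 0 (by simp)
    have h1 := hi 1 (by simp)
    simp at h0 h1
    apply hab
    rw [← h0, ← h1]
    exact hξ i
  · intro h i
    by_contra hne
    refine h [ξ i, ξ (i + 1)] ?_ ⟨i, ?_⟩
    · simp only [Finset.mem_image, Finset.mem_filter, Finset.mem_univ, true_and]
      exact ⟨(ξ i, ξ (i + 1)), hne, rfl⟩
    · rintro (_ | _ | k) hk
      · simp
      · simp
      · simp at hk

theorem factor {A : Type} {𝒢 : LGraph A} {X : Set (ℤ → A)} (hP : 𝒢.Presents X) :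
    IsFactorCode 𝒢.G.edgeShift X (fun ξ i => 𝒢.label (ξ i)) := by
  refine ⟨⟨0, 0, ?_⟩, ?_, ?_, ?_⟩
  · intro x _ y _ i h
    simp only
    rw [h i (by simp) (by simp)]
  · intro ξ hξ
    rw [hP]; exact ⟨ξ, hξ, fun _ => rfl⟩
  · intro y hy
    rw [hP] at hy
    obtain ⟨ξ, hξ, h⟩ := hy
    exact ⟨ξ, hξ, funext h⟩
  · intro x _
    rfl

theorem rr {A : Type} {𝒢 : LGraph A} (hR : 𝒢.RightResolving) :
    IsRightResolvingCode 𝒢.G.edgeShift (fun ξ i => 𝒢.label (ξ i)) := by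
  have key : ∀ a b, InLang 𝒢.G.edgeShift [a, b] → 𝒢.G.tgt a = 𝒢.G.src b := by
    rintro a b ⟨ξ, hξ, i, hi⟩
    have h0 := hi 0 (by simp)
    have h1 := hi 1 (by simp)
    simp at h0 h1
    rw [← h0, ← h1]
    exact hξ i
  refine ⟨𝒢.label, fun _ _ _ => rfl, fun a b c hb hc h => hR _ _ ?_ h⟩
  rw [← key a b hb, ← key a c hc]

/-- pull back the labeling along a graph isomorphism -/
def pull {B : Type} {G : FinGraph} (𝒢 : LGraph B) (iso : GraphIso G 𝒢.G) : LGraph B :=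
  ⟨G, fun e => 𝒢.label (iso.emap e)⟩

theorem pull_fischer {B : Type} {G : FinGraph} {𝒢 : LGraph B} {Y : Set (ℤ → B)}
    (hG : G.Irreducible) (iso : GraphIso G 𝒢.G) (hF : IsFischerCover 𝒢 Y) :
    IsFischerCover (pull 𝒢 iso) Y := by
  obtain ⟨-, hR, hP, hmin⟩ := hF
  refine ⟨hG, ?_, ?_, ?_⟩
  · intro e f h1 h2
    refine iso.emap.injective (hR _ _ ?_ h2)
    exact (iso.src_eq e).trans ((congrArg iso.vmap h1).trans (iso.src_eq f).symm)
  · unfold LGraph.Presents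
    rw [hP]
    ext y
    constructor
    · rintro ⟨ξ, hξ, h⟩
      refine ⟨fun i => iso.emap.symm (ξ i), fun i => ?_, fun i => ?_⟩
      · apply iso.vmap.injective
        change iso.vmap (G.tgt _) = iso.vmap (G.src _)
        rw [← iso.src_eq, ← iso.tgt_eq]
        simpa using hξ i
      · simpa [pull] using h i
    · rintro ⟨ξ, hξ, h⟩
      refine ⟨fun i => iso.emap (ξ i), fun i => ?_, h⟩
      exact (iso.tgt_eq (ξ i)).trans
        ((congrArg iso.vmap (hξ i)).trans (iso.src_eq (ξ (i + 1))).symm)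
  · intro H h1 h2
    have : Fintype.card G.V = Fintype.card 𝒢.G.V := Fintype.card_congr iso.vmap
    exact this.le.trans (hmin H h1 h2)

end FischerAux

/-- If `X` and `Y` are irreducible sofic shifts whose Fischer covers
have graph-isomorphic underlying graphs, then `X` and `Y` are right-resolving almost
conjugate; a common SFT extension is the edge shift `X_{G_X}` with legs `(ℒ_X)_∞`
and `(ℒ_Y)_∞` composed with the graph isomorphism. -/
theorem fischer_graph_iso_implies_rr_almost_conjugate
    {A B : Type} (X : Set (ℤ → A)) (Y : Set (ℤ → B))
    (hXi : IrreducibleShift X) (hYi : IrreducibleShift Y)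
    (hXs : IsSofic X) (hYs : IsSofic Y)
    (𝒢X : LGraph A) (𝒢Y : LGraph B)
    (hFX : IsFischerCover 𝒢X X) (hFY : IsFischerCover 𝒢Y Y)
    (iso : GraphIso 𝒢X.G 𝒢Y.G) :
    RRAlmostConjugate X Y ∧
    IsSFT 𝒢X.G.edgeShift ∧
    IsFactorCode 𝒢X.G.edgeShift X (fun ξ i => 𝒢X.label (ξ i)) ∧
    IsFactorCode 𝒢X.G.edgeShift Y (fun ξ i => 𝒢Y.label (iso.emap (ξ i))) ∧
    IsRightResolvingCode 𝒢X.G.edgeShift (fun ξ i => 𝒢X.label (ξ i)) ∧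
    IsRightResolvingCode 𝒢X.G.edgeShift (fun ξ i => 𝒢Y.label (iso.emap (ξ i))) ∧
    OneOneAE 𝒢X.G.edgeShift X (fun ξ i => 𝒢X.label (ξ i)) ∧
    OneOneAE 𝒢X.G.edgeShift Y (fun ξ i => 𝒢Y.label (iso.emap (ξ i))) := by
  have hY := FischerAux.pull_fischer hFX.1 iso hFY
  have s := FischerAux.edgeShift_sft 𝒢X.G
  have fx := FischerAux.factor hFX.2.2.1
  have fy := FischerAux.factor hY.2.2.1
  have rx := FischerAux.rr hFX.2.1
  have ry := FischerAux.rr hY.2.1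
  have ox := FischerAux.oneOne hFX
  have oy := FischerAux.oneOne hY
  exact ⟨⟨𝒢X.G.E, inferInstance, 𝒢X.G.edgeShift, _, _, s, fx, fy, rx, ry, ox, oy⟩,
    s, fx, fy, rx, ry, ox, oy⟩
end

section
/- For every β ∈ (1,2], the β-shift X_β and its associated S-gap shift ASS(X_β) = X(S), S = {i − 1 : i ∈ ℕ, a_i = 1}, have equal topological entropy: h(X_β) = h(X(S)). -/
/-! ## Analytic lemmas -/

namespace BetaAux

open Finset in
lemma rem_bounds (β : ℝ) (hβ1 : 1 < β) (hβ2 : β ≤ 2) (n : ℕ) :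
    0 ≤ betaRem β n ∧ betaRem β n ≤ β⁻¹ ^ n := by
  induction n with
  | zero => simp [betaRem]
  | succ n ih =>
    have hp : (0:ℝ) < β⁻¹ ^ (n+1) := by positivity
    have hm : β⁻¹ ^ n ≤ 2 * β⁻¹ ^ (n+1) := by
      have : β⁻¹ ^ n = β * β⁻¹ ^ (n+1) := by
        rw [pow_succ]; field_simp
      rw [this]; nlinarith
    simp only [betaRem]
    split_ifs with h
    · constructor <;> linarith [ih.2]
    · push Not at h
      constructor <;> linarith [ih.1]

/-- weights -/
noncomputable def wt (β : ℝ) (m : ℕ) : ℝ := if betaDigit β m = 1 then β⁻¹ ^ (m+1) else 0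

lemma wt_nonneg (β : ℝ) (hβ1 : 1 < β) (m : ℕ) : 0 ≤ wt β m := by
  unfold wt; split_ifs <;> positivity

lemma rem_succ (β : ℝ) (n : ℕ) : betaRem β (n+1) = betaRem β n - wt β n := by
  unfold wt betaDigit
  simp only [betaRem]
  split_ifs with h1 h2 h2 <;> simp_all

lemma sum_wt (β : ℝ) (n : ℕ) : ∑ m ∈ Finset.range n, wt β m = 1 - betaRem β n := by
  induction n with
  | zero => simp [betaRem]
  | succ n ih => rw [Finset.sum_range_succ, ih, rem_succ]; ring

lemma digit_zero (β : ℝ) (hβ1 : 1 < β) : betaDigit β 0 = 1 := by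
  unfold betaDigit
  rw [if_pos]
  simp only [betaRem, zero_add, pow_one]
  exact inv_le_one_of_one_le₀ hβ1.le

lemma upper_rec (β : ℝ) (hβ1 : 1 < β) (hβ2 : β ≤ 2) (f : ℕ → ℕ)
    (hf : ∀ n, f n ≤ 1 + ∑ m ∈ (Finset.range n).filter (fun m => betaDigit β m = 1), f (n - m - 1))
    (n : ℕ) : (f n : ℝ) ≤ (n + 1) * β ^ n := by
  induction n using Nat.strong_induction_on with
  | _ n ih =>
    have h1 : (f n : ℝ) ≤ 1 + ∑ m ∈ (Finset.range n).filter (fun m => betaDigit β m = 1),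
        (f (n - m - 1) : ℝ) := by exact_mod_cast hf n
    have h2 : ∑ m ∈ (Finset.range n).filter (fun m => betaDigit β m = 1), (f (n - m - 1) : ℝ)
        ≤ ∑ m ∈ Finset.range n, n * β ^ n * wt β m := by
      rw [Finset.sum_filter]
      apply Finset.sum_le_sum
      intro m hm
      have hm := Finset.mem_range.1 hm
      unfold wt
      split_ifs with h
      · have h3 := ih (n - m - 1) (by omega)
        have h4 : β ^ n * β⁻¹ ^ (m+1) = β ^ (n - m - 1) := by
          have : n = (n - m - 1) + (m+1) := by omega
          conv_lhs => rw [this, pow_add]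
          rw [mul_assoc, ← mul_pow, mul_inv_cancel₀ (by positivity), one_pow, mul_one]
        rw [mul_assoc, h4]
        refine h3.trans ?_
        gcongr
        have : n - m - 1 + 1 ≤ n := by omega
        exact_mod_cast this
      · simp
    rw [← Finset.mul_sum, sum_wt] at h2
    have h5 := (rem_bounds β hβ1 hβ2 n).1
    have h6 : (1:ℝ) ≤ β ^ n := one_le_pow₀ hβ1.le
    have h7 : 0 ≤ n * β ^ n * betaRem β n := by positivity
    nlinarith

lemma lower_rec (β : ℝ) (hβ1 : 1 < β) (hβ2 : β ≤ 2) (f : ℕ → ℕ) (h0 : 1 ≤ f 0)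
    (hf : ∀ n, ∑ m ∈ (Finset.range (n+1)).filter (fun m => betaDigit β m = 1), f (n - m) ≤ f (n+1))
    (n : ℕ) : β ^ n ≤ (n + 1) * f n := by
  have hmono : Monotone f := by
    apply monotone_nat_of_le_succ
    intro n
    refine le_trans ?_ (hf n)
    refine le_trans (le_of_eq ?_) (Finset.single_le_sum (f := fun m => f (n - m))
      (fun _ _ => Nat.zero_le _) (a := 0) ?_)
    · simp
    · simp [digit_zero β hβ1]
  -- scaled counts
  let u : ℕ → ℝ := fun k => f k * β⁻¹ ^ k
  have hu : ∀ n, ∑ m ∈ Finset.range (n+1), u (n - m) * wt β m ≤ u (n+1) := by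
    intro n
    have h1 : (∑ m ∈ (Finset.range (n+1)).filter (fun m => betaDigit β m = 1), (f (n - m) : ℝ))
        ≤ f (n+1) := by exact_mod_cast hf n
    have h2 : ∑ m ∈ Finset.range (n+1), u (n - m) * wt β m =
      (∑ m ∈ (Finset.range (n+1)).filter (fun m => betaDigit β m = 1), (f (n - m) : ℝ))
        * β⁻¹ ^ (n+1) := by
      rw [Finset.sum_filter, Finset.sum_mul]
      apply Finset.sum_congr rfl
      intro m hm
      have hm := Finset.mem_range.1 hm
      simp only [u, wt]
      split_ifs
      · rw [mul_assoc, ← pow_add]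
        congr 2; omega
      · simp
    rw [h2]
    exact mul_le_mul_of_nonneg_right h1 (by positivity)
  have hW : ∀ n, 1 ≤ ∑ j ∈ Finset.range (n+1), u (n - j) * betaRem β j := by
    intro n
    induction n with
    | zero => simpa [u, betaRem] using h0
    | succ n ih =>
      rw [Finset.sum_range_succ']
      have : ∑ k ∈ Finset.range (n+1), u (n + 1 - (k+1)) * betaRem β (k+1)
        = ∑ k ∈ Finset.range (n+1), u (n - k) * betaRem β k
          - ∑ k ∈ Finset.range (n+1), u (n - k) * wt β k := by
        rw [← Finset.sum_sub_distrib]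
        apply Finset.sum_congr rfl
        intro k _
        rw [rem_succ, Nat.add_sub_add_right]; ring
      rw [this]
      simp only [betaRem, Nat.sub_zero, mul_one]
      linarith [hu n]
  have h3 : ∑ j ∈ Finset.range (n+1), u (n - j) * betaRem β j
      ≤ ∑ j ∈ Finset.range (n+1), (f n : ℝ) * β⁻¹ ^ n := by
    apply Finset.sum_le_sum
    intro j hj
    have hj := Finset.mem_range.1 hj
    have h4 : u (n - j) * betaRem β j ≤ u (n-j) * β⁻¹ ^ j :=
      mul_le_mul_of_nonneg_left (rem_bounds β hβ1 hβ2 j).2 (by positivity)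
    refine h4.trans ?_
    simp only [u]
    rw [mul_assoc, ← pow_add, Nat.sub_add_cancel (by omega)]
    gcongr
    exact hmono (by omega)
  have h5 := (hW n).trans h3
  rw [Finset.sum_const, Finset.card_range, nsmul_eq_mul, inv_pow] at h5
  have hp : 0 < β ^ n := by positivity
  calc β ^ n = β ^ n * 1 := by ring
    _ ≤ β ^ n * (((n + 1 : ℕ) : ℝ) * (f n * (β ^ n)⁻¹)) := by gcongr
    _ = _ := by push_cast; field_simp

lemma entropy_of_bounds {A : Type} (X : Set (ℤ → A)) (β : ℝ) (hβ1 : 1 < β)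
    (hl : ∀ n : ℕ, β ^ n ≤ (n + 1) * wordCount X n)
    (hu : ∀ n : ℕ, (wordCount X n : ℝ) ≤ (n + 1) ^ 2 * β ^ n) :
    HasEntropy X (Real.log β) := by
  unfold HasEntropy
  have hlog : Filter.Tendsto (fun n : ℕ => Real.log ((n:ℝ) + 1) / n) Filter.atTop (nhds 0) := by
    have h1 : Filter.Tendsto (fun n : ℕ => Real.log ((n:ℝ) + 1) / ((n:ℝ)+1))
        Filter.atTop (nhds 0) := by
      have := Real.isLittleO_log_id_atTop.tendsto_div_nhds_zero
      exact this.comp (Filter.tendsto_atTop_add_const_right _ 1 tendsto_natCast_atTop_atTop)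
    have h2 : Filter.Tendsto (fun n : ℕ => 2 * (Real.log ((n:ℝ) + 1) / ((n:ℝ)+1)))
        Filter.atTop (nhds 0) := by simpa using h1.const_mul 2
    refine tendsto_of_tendsto_of_tendsto_of_le_of_le' tendsto_const_nhds h2 ?_ ?_
    · filter_upwards with n
      have : 0 ≤ Real.log ((n:ℝ)+1) := Real.log_nonneg (by linarith [n.cast_nonneg (α := ℝ)])
      positivity
    · filter_upwards [Filter.eventually_ge_atTop 1] with n hn
      have hn' : (1:ℝ) ≤ n := by exact_mod_cast hn
      have : 0 ≤ Real.log ((n:ℝ)+1) := Real.log_nonneg (by linarith)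
      rw [← mul_div_assoc, div_le_div_iff₀ (by linarith) (by linarith)]
      nlinarith
  have hlo : Filter.Tendsto (fun n : ℕ => Real.log β - Real.log ((n:ℝ) + 1) / n)
      Filter.atTop (nhds (Real.log β)) := by simpa using hlog.const_sub (Real.log β)
  have hhi : Filter.Tendsto (fun n : ℕ => Real.log β + 2 * (Real.log ((n:ℝ) + 1) / n))
      Filter.atTop (nhds (Real.log β)) := by simpa using (hlog.const_mul 2).const_add (Real.log β)
  refine tendsto_of_tendsto_of_tendsto_of_le_of_le' hlo hhi ?_ ?_
  · filter_upwards [Filter.eventually_ge_atTop 1] with n hn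
    have hn' : (1:ℝ) ≤ n := by exact_mod_cast hn
    have hp : 0 < β ^ n := by positivity
    have hw : 0 < (wordCount X n : ℝ) := by
      by_contra hc
      have : (wordCount X n : ℝ) = 0 := le_antisymm (not_lt.1 hc) (Nat.cast_nonneg _)
      have := hl n
      simp_all
      linarith
    have := Real.log_le_log hp (hl n)
    rw [Real.log_pow, Real.log_mul (by positivity) hw.ne'] at this
    rw [le_div_iff₀ (by linarith), sub_mul, div_mul_cancel₀ _ (by positivity)]
    linarith
  · filter_upwards [Filter.eventually_ge_atTop 1] with n hn
    have hn' : (1:ℝ) ≤ n := by exact_mod_cast hn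
    have hp : 0 < β ^ n := by positivity
    have hw : 0 < (wordCount X n : ℝ) := by
      by_contra hc
      have : (wordCount X n : ℝ) = 0 := le_antisymm (not_lt.1 hc) (Nat.cast_nonneg _)
      have := hl n
      simp_all
      linarith
    have := Real.log_le_log hw (hu n)
    rw [Real.log_mul (by positivity) (by positivity), Real.log_pow, Real.log_pow] at this
    rw [div_le_iff₀ (by linarith), add_mul, mul_assoc, div_mul_cancel₀ _ (by positivity)]
    push_cast at this
    linarith

/-! ## Words -/

/-- The word of length `n` read in `x` from `i`. -/
def word {A : Type} (x : ℤ → A) (i : ℤ) (n : ℕ) : List A :=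
  (List.range n).map (fun k : ℕ => x (i + k))

lemma word_length {A : Type} (x : ℤ → A) (i : ℤ) (n : ℕ) : (word x i n).length = n := by
  simp [word]

lemma occursAt_iff {A : Type} (w : List A) (x : ℤ → A) (i : ℤ) :
    occursAt w x i ↔ w = word x i w.length := by
  constructor
  · intro h
    apply List.ext_get
    · simp [word]
    · intro k h1 h2
      simpa [word] using (h k h1).symm
  · intro h k hk
    have : w.get ⟨k, hk⟩ = (word x i w.length).get ⟨k, by simpa [word] using hk⟩ := by
      simp only [List.get_eq_getElem]
      congr 1
    rw [this]; simp [word]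

lemma inLang_iff {A : Type} (X : Set (ℤ → A)) (w : List A) :
    InLang X w ↔ ∃ x ∈ X, ∃ i, w = word x i w.length := by
  simp only [InLang, occursIn, occursAt_iff]

lemma inLang_word {A : Type} (X : Set (ℤ → A)) (x : ℤ → A) (hx : x ∈ X) (i : ℤ) (n : ℕ) :
    InLang X (word x i n) := by
  rw [inLang_iff]; exact ⟨x, hx, i, by rw [word_length]⟩

lemma word_add {A : Type} (x : ℤ → A) (i : ℤ) (m n : ℕ) :
    word x i (m + n) = word x i m ++ word x (i + m) n := by
  simp [word, List.range_add, Function.comp_def, add_assoc]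

lemma word_succ {A : Type} (x : ℤ → A) (i : ℤ) (n : ℕ) :
    word x i (n + 1) = x i :: word x (i + 1) n := by
  rw [add_comm n 1, word_add]; simp [word]

lemma word_split {A : Type} (x : ℤ → A) (i : ℤ) (m n : ℕ) (h : m < n) :
    word x i n = word x i m ++ x (i + m) :: word x (i + m + 1) (n - m - 1) := by
  have : n = m + ((n - m - 1) + 1) := by omega
  conv_lhs => rw [this]
  rw [word_add, word_succ]

lemma word_congr {A : Type} (x : ℤ → A) (a : ℕ → A) (i : ℤ) (n : ℕ)
    (h : ∀ k < n, x (i + (k:ℕ)) = a k) : word x i n = (List.range n).map a := by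
  apply List.map_congr_left
  intro k hk
  exact h k (List.mem_range.1 hk)

/-- Language of length `n`. -/
def Lg (X : Set (ℤ → Fin 2)) (n : ℕ) : Set (List (Fin 2)) := {w | w.length = n ∧ InLang X w}

/-- Follower words of `1`. -/
def Fg (X : Set (ℤ → Fin 2)) (n : ℕ) : Set (List (Fin 2)) :=
  {w | w.length = n ∧ InLang X (1 :: w)}

lemma Lg_fin (X : Set (ℤ → Fin 2)) (n : ℕ) : (Lg X n).Finite :=
  (List.finite_length_eq (Fin 2) n).subset fun _ h => h.1

lemma Fg_fin (X : Set (ℤ → Fin 2)) (n : ℕ) : (Fg X n).Finite :=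
  (List.finite_length_eq (Fin 2) n).subset fun _ h => h.1

lemma count_le (L : Set (List (Fin 2))) (f : ℕ → Set (List (Fin 2))) (hfin : ∀ n, (f n).Finite)
    (T : Finset ℕ) (p : List (Fin 2)) (g : ℕ → List (Fin 2) → List (Fin 2))
    (h : ∀ w ∈ L, w = p ∨ ∃ m ∈ T, ∃ v ∈ f m, w = g m v) :
    L.ncard ≤ 1 + ∑ m ∈ T, (f m).ncard := by
  classical
  let F : ℕ → Finset (List (Fin 2)) := fun n => (hfin n).toFinset
  let U : Finset (List (Fin 2)) := {p} ∪ T.biUnion (fun m => (F m).image (g m))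
  have h1 : L ⊆ (U : Set (List (Fin 2))) := by
    intro w hw
    rcases h w hw with h | ⟨m, hm, v, hv, rfl⟩
    · simp [U, h]
    · simp only [U, F, Finset.coe_union, Set.mem_union, Finset.mem_coe, Finset.mem_biUnion,
        Finset.mem_image, Set.Finite.mem_toFinset]
      exact Or.inr ⟨m, hm, v, hv, rfl⟩
  have h2 := Set.ncard_le_ncard h1 U.finite_toSet
  rw [Set.ncard_coe_finset] at h2
  refine h2.trans ((Finset.card_union_le _ _).trans ?_)
  rw [Finset.card_singleton]
  gcongr
  refine Finset.card_biUnion_le.trans (Finset.sum_le_sum fun m _ => ?_)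
  rw [Set.ncard_eq_toFinset_card _ (hfin m)]
  exact Finset.card_image_le

lemma le_count (L : Set (List (Fin 2))) (hL : L.Finite) (f : ℕ → Set (List (Fin 2)))
    (hfin : ∀ n, (f n).Finite)
    (T : Finset ℕ) (g : ℕ → List (Fin 2) → List (Fin 2))
    (hg : ∀ m v m' v', g m v = g m' v' → m = m' ∧ v = v')
    (h : ∀ m ∈ T, ∀ v ∈ f m, g m v ∈ L) :
    ∑ m ∈ T, (f m).ncard ≤ L.ncard := by
  classical
  have : ∑ m ∈ T, (f m).ncard = (T.sigma (fun n => (hfin n).toFinset)).card := by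
    rw [Finset.card_sigma]
    exact Finset.sum_congr rfl fun m _ => Set.ncard_eq_toFinset_card _ (hfin m)
  rw [this, Set.ncard_eq_toFinset_card _ hL]
  apply Finset.card_le_card_of_injOn (fun z => g z.1 z.2)
  · rintro ⟨m, v⟩ hz
    simp at hz
    simpa using h m hz.1 v hz.2
  · rintro ⟨m, v⟩ _ ⟨m', v'⟩ _ heq
    obtain ⟨rfl, rfl⟩ := hg _ _ _ _ heq
    rfl

lemma rep_inj (m : ℕ) (v : List (Fin 2)) (m' : ℕ) (v' : List (Fin 2))
    (h : List.replicate m (0 : Fin 2) ++ 1 :: v = List.replicate m' 0 ++ 1 :: v') :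
    m = m' ∧ v = v' := by
  induction m generalizing m' with
  | zero =>
    cases m' with
    | zero => simpa using h
    | succ k => simp [List.replicate_succ] at h
  | succ m ih =>
    cases m' with
    | zero => simp [List.replicate_succ] at h
    | succ k =>
      simp only [List.replicate_succ, List.cons_append, List.cons.injEq, true_and] at h
      obtain ⟨h1, h2⟩ := ih k h
      exact ⟨by omega, h2⟩

lemma fin2_ne {a : Fin 2} (h : a ≠ 1) : a = 0 := by omega

/-! ## β-shift, upper bound -/

lemma beta_upper_step (β : ℝ) (n : ℕ) :
    (Lg (betaShift β) n).ncard ≤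
      1 + ∑ m ∈ (Finset.range n).filter (fun m => betaDigit β m = 1),
        (Lg (betaShift β) (n - m - 1)).ncard := by
  apply count_le (Lg (betaShift β) n) (fun m => Lg (betaShift β) (n - m - 1)) (fun m => Lg_fin _ _)
    _ ((List.range n).map (betaDigit β))
    (fun m v => (List.range m).map (betaDigit β) ++ 0 :: v)
  rintro w ⟨hlen, hw⟩
  rw [inLang_iff, hlen] at hw
  obtain ⟨x, hx, i, rfl⟩ := hw
  rcases hx i with h | ⟨m, hm, hlt⟩
  · left
    exact word_congr _ _ _ _ fun k _ => congrFun h k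
  · by_cases hmn : m < n
    · right
      have hlt' : x (i + m) < betaDigit β m := hlt
      have h0 : x (i + m) = 0 := by omega
      have h1 : betaDigit β m = 1 := by omega
      refine ⟨m, by simp [hmn, h1], word x (i + m + 1) (n - m - 1),
        ⟨word_length _ _ _, inLang_word _ _ hx _ _⟩, ?_⟩
      rw [word_split x i m n hmn, h0, word_congr x (betaDigit β) i m hm]
    · left
      exact word_congr _ _ _ _ fun k hk => hm k (by omega)

/-! ## β-shift, lower bound -/

/-- Greedy remainder starting from `y`. -/
noncomputable def gr (β y : ℝ) : ℕ → ℝ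
  | 0 => y
  | n + 1 => gr β y n - (if β⁻¹ ^ (n + 1) ≤ gr β y n then β⁻¹ ^ (n + 1) else 0)

/-- Greedy digits of `y`. -/
noncomputable def gd (β y : ℝ) (n : ℕ) : Fin 2 := if β⁻¹ ^ (n + 1) ≤ gr β y n then 1 else 0

lemma gr_one (β : ℝ) (n : ℕ) : gr β 1 n = betaRem β n := by
  induction n with
  | zero => rfl
  | succ n ih => simp only [gr, betaRem, ih]

lemma gd_one (β : ℝ) : gd β 1 = betaDigit β := by
  funext n; simp only [gd, betaDigit, gr_one]

lemma gr_bounds (β : ℝ) (hβ1 : 1 < β) (hβ2 : β ≤ 2) (y : ℝ) (h0 : 0 ≤ y) (h1 : y ≤ 1) (n : ℕ) :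
    0 ≤ gr β y n ∧ gr β y n ≤ β⁻¹ ^ n := by
  induction n with
  | zero => simp [gr, h0, h1]
  | succ n ih =>
    have hp : (0:ℝ) < β⁻¹ ^ (n+1) := by positivity
    have hm : β⁻¹ ^ n ≤ 2 * β⁻¹ ^ (n+1) := by
      have : β⁻¹ ^ n = β * β⁻¹ ^ (n+1) := by
        rw [pow_succ]; field_simp
      rw [this]; nlinarith
    simp only [gr]
    split_ifs with h
    · constructor <;> linarith [ih.2]
    · push Not at h
      constructor <;> linarith [ih.1]

lemma gr_succ (β y : ℝ) (n : ℕ) :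
    gr β y (n+1) = gr β y n - (if gd β y n = 1 then β⁻¹ ^ (n + 1) else 0) := by
  unfold gd
  simp only [gr]
  split_ifs with h1 h2 h2 <;> simp_all

lemma gr_diff (β y z : ℝ) (n : ℕ) (h : ∀ k < n, gd β y k = gd β z k) :
    gr β y n - gr β z n = y - z := by
  induction n with
  | zero => simp [gr]
  | succ n ih =>
    rw [gr_succ, gr_succ, h n (by omega)]
    linarith [ih fun k hk => h k (by omega)]

lemma gd_mono (β y z : ℝ) (hyz : y ≤ z) : lexLE (gd β y) (gd β z) := by
  classical
  by_cases h : gd β y = gd β z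
  · exact Or.inl h
  · right
    have hex : ∃ n, gd β y n ≠ gd β z n := Function.ne_iff.1 h
    refine ⟨Nat.find hex, fun k hk => not_not.1 (Nat.find_min hex hk), ?_⟩
    have hne := Nat.find_spec hex
    have hd := gr_diff β y z (Nat.find hex) fun k hk => not_not.1 (Nat.find_min hex hk)
    generalize Nat.find hex = n at *
    unfold gd at *
    split_ifs at * with h1 h2 h2
    · simp at hne
    · exfalso; apply h2; linarith
    · decide
    · simp at hne

lemma gr_tail (β y : ℝ) (hβ1 : 1 < β) (i n : ℕ) :
    gr β (β ^ i * gr β y i) n = β ^ i * gr β y (i + n) := by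
  have hc : β ^ i * β⁻¹ ^ i = 1 := by
    rw [← mul_pow, mul_inv_cancel₀ (by positivity), one_pow]
  have hp : 0 < β ^ i := by positivity
  induction n with
  | zero => simp [gr]
  | succ n ih =>
    have he : β⁻¹ ^ (n+1) = β ^ i * β⁻¹ ^ (i + n + 1) := by
      rw [add_assoc, pow_add β⁻¹ i, ← mul_assoc, hc, one_mul]
    rw [← add_assoc]
    simp only [gr]
    rw [ih, he]
    simp only [mul_le_mul_iff_right₀ hp]
    split_ifs <;> ring

lemma gd_tail (β y : ℝ) (hβ1 : 1 < β) (i n : ℕ) :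
    gd β (β ^ i * gr β y i) n = gd β y (i + n) := by
  have hc : β ^ i * β⁻¹ ^ i = 1 := by
    rw [← mul_pow, mul_inv_cancel₀ (by positivity), one_pow]
  have hp : 0 < β ^ i := by positivity
  have he : β⁻¹ ^ (n+1) = β ^ i * β⁻¹ ^ (i + n + 1) := by
    rw [add_assoc, pow_add β⁻¹ i, ← mul_assoc, hc, one_mul]
  simp only [gd]
  rw [gr_tail β y hβ1, he]
  simp only [mul_le_mul_iff_right₀ hp]

/-- Two-sided point. -/
noncomputable def pt (β y : ℝ) : ℤ → Fin 2 := fun i => if i < 0 then 0 else gd β y i.toNat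

lemma pt_mem (β : ℝ) (hβ1 : 1 < β) (hβ2 : β ≤ 2) (y : ℝ) (h0 : 0 ≤ y) (h1 : y ≤ 1) :
    pt β y ∈ betaShift β := by
  intro i
  by_cases hi : i < 0
  · right
    refine ⟨0, by simp, ?_⟩
    rw [digit_zero β hβ1]
    simp [pt, hi]
  · have hb := gr_bounds β hβ1 hβ2 y h0 h1 i.toNat
    have hc : β ^ i.toNat * β⁻¹ ^ i.toNat = 1 := by
      rw [← mul_pow, mul_inv_cancel₀ (by positivity), one_pow]
    have hp : 0 < β ^ i.toNat := by positivity
    have hle : β ^ i.toNat * gr β y i.toNat ≤ 1 := by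
      rw [← hc]; gcongr; exact hb.2
    have := gd_mono β _ _ hle
    rw [gd_one] at this
    convert this using 1
    funext n
    rw [gd_tail β y hβ1]
    have h2 : ¬ (i + (n:ℤ) < 0) := by omega
    have h3 : (i + (n:ℤ)).toNat = i.toNat + n := by omega
    simp [pt, h2, h3]

lemma beta_lower (β : ℝ) (hβ1 : 1 < β) (hβ2 : β ≤ 2) (n : ℕ) :
    β ^ n ≤ (Lg (betaShift β) n).ncard := by
  have hp : 0 < β ^ n := by positivity
  let M := ⌈β ^ n⌉₊
  have hM : β ^ n ≤ M := Nat.le_ceil _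
  have hM2 : (M:ℝ) < β ^ n + 1 := Nat.ceil_lt_add_one hp.le
  refine hM.trans ?_
  have hM0 : 0 < M := Nat.ceil_pos.2 hp
  norm_cast
  have hcard : M = (Finset.range M).card := by simp
  rw [hcard, Set.ncard_eq_toFinset_card _ (Lg_fin _ n)]
  let Y : ℕ → ℝ := fun k => k / (M - 1 : ℕ)
  have hYs : ∀ k ∈ Finset.range M, 0 ≤ Y k ∧ Y k ≤ 1 := by
    intro k hk
    have hk := Finset.mem_range.1 hk
    refine ⟨by positivity, ?_⟩
    apply div_le_one_of_le₀ _ (by positivity)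
    have : k ≤ M - 1 := by omega
    exact_mod_cast this
  apply Finset.card_le_card_of_injOn (fun k => word (pt β (Y k)) 0 n)
  · intro k hk
    obtain ⟨h0, h1⟩ := hYs k hk
    simp only [Set.Finite.coe_toFinset]
    exact ⟨word_length _ _ _, inLang_word _ _ (pt_mem β hβ1 hβ2 _ h0 h1) _ _⟩
  · intro k hk l hl heq
    have hdig : ∀ j < n, gd β (Y k) j = gd β (Y l) j := by
      intro j hj
      have h1 := List.map_inj_left.1 heq j (List.mem_range.2 hj)
      have hj0 : ¬ ((j:ℤ) < 0) := by omega
      simpa [pt, hj0] using h1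
    have hd := gr_diff β _ _ n hdig
    obtain ⟨hk0, hk1⟩ := hYs k hk
    obtain ⟨hl0, hl1⟩ := hYs l hl
    have b1 := gr_bounds β hβ1 hβ2 _ hk0 hk1 n
    have b2 := gr_bounds β hβ1 hβ2 _ hl0 hl1 n
    have habs : |Y k - Y l| ≤ β⁻¹ ^ n := by
      rw [← hd, abs_le]; constructor <;> linarith [b1.1, b1.2, b2.1, b2.2]
    by_contra hne
    have hk' := Finset.mem_range.1 (Finset.mem_coe.1 hk)
    have hl' := Finset.mem_range.1 (Finset.mem_coe.1 hl)
    have hM1 : 0 < M - 1 := by omega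
    have hM1r : (0:ℝ) < (M - 1 : ℕ) := by exact_mod_cast hM1
    have hMc : ((M - 1 : ℕ) : ℝ) = M - 1 := by push_cast [Nat.cast_sub hM0]; ring
    have hge : 1 ≤ |(k:ℝ) - l| := by
      have : (1:ℤ) ≤ |(k:ℤ) - l| := Int.one_le_abs (by omega)
      exact_mod_cast this
    have hY : |Y k - Y l| = |(k:ℝ) - l| / (M - 1 : ℕ) := by
      simp only [Y]
      rw [← sub_div, abs_div, abs_of_pos hM1r]
    rw [hY, div_le_iff₀ hM1r, hMc, inv_pow] at habs
    have : (β ^ n)⁻¹ * (M - 1) < (β ^ n)⁻¹ * β ^ n := by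
      gcongr; linarith
    rw [inv_mul_cancel₀ hp.ne'] at this
    linarith

/-! ## S-gap shift -/

/-- either zero word or a first `1`. -/
lemma first_one (x : ℤ → Fin 2) (i : ℤ) (n : ℕ) :
    word x i n = List.replicate n 0 ∨ ∃ m < n, (∀ k < m, x (i + (k:ℕ)) = 0) ∧ x (i + m) = 1 ∧
      word x i n = List.replicate m 0 ++ 1 :: word x (i + m + 1) (n - m - 1) := by
  classical
  have hrep : ∀ m : ℕ, (∀ k < m, x (i + (k:ℕ)) = 0) → word x i m = List.replicate m 0 := by
    intro m h
    rw [word_congr x (fun _ => 0) i m h]; simp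
  by_cases hex : ∃ m, m < n ∧ x (i + (m:ℕ)) = 1
  · right
    have hmin : ∀ k < Nat.find hex, x (i + (k:ℕ)) = 0 := by
      intro k hk
      have h1 := Nat.find_min hex hk
      have h2 := (Nat.find_spec hex).1
      exact fin2_ne fun h => h1 ⟨by omega, h⟩
    obtain ⟨h1, h2⟩ := Nat.find_spec hex
    refine ⟨Nat.find hex, h1, hmin, h2, ?_⟩
    rw [word_split x i _ n h1, h2, hrep _ hmin]
  · left
    exact hrep n fun k hk => fin2_ne fun h => hex ⟨k, hk, h⟩

lemma word_one_mem (X : Set (ℤ → Fin 2)) (x : ℤ → Fin 2) (hx : x ∈ X) (i : ℤ) (h : x i = 1)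
    (n : ℕ) : word x (i+1) n ∈ Fg X n := by
  refine ⟨word_length _ _ _, ?_⟩
  rw [← h, ← word_succ]
  exact inLang_word _ _ hx _ _

lemma inLang_one {X : Set (ℤ → Fin 2)} {w : List (Fin 2)} (h : InLang X (1 :: w)) :
    ∃ x ∈ X, ∃ i, x i = 1 ∧ w = word x (i+1) w.length := by
  rw [inLang_iff] at h
  obtain ⟨x, hx, i, h⟩ := h
  rw [List.length_cons, word_succ, List.cons.injEq] at h
  exact ⟨x, hx, i, h.1.symm, h.2⟩

lemma gap_upper_step (β : ℝ) (n : ℕ) :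
    (Fg (SGap (assocS β)) n).ncard ≤
      1 + ∑ m ∈ (Finset.range n).filter (fun m => betaDigit β m = 1),
        (Fg (SGap (assocS β)) (n - m - 1)).ncard := by
  apply count_le (Fg (SGap (assocS β)) n) (fun m => Fg (SGap (assocS β)) (n - m - 1))
    (fun m => Fg_fin _ _) _ (List.replicate n 0) (fun m v => List.replicate m 0 ++ 1 :: v)
  rintro w ⟨hlen, hw⟩
  obtain ⟨x, hx, i, hi, hw⟩ := inLang_one hw
  rw [hlen] at hw
  rcases first_one x (i+1) n with h | ⟨m, hm, hz, h1, h⟩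
  · left; rw [hw, h]
  · right
    refine ⟨m, ?_, _, word_one_mem _ x hx _ h1 (n - m - 1), by rw [hw, h]⟩
    simp only [Finset.mem_filter, Finset.mem_range]
    refine ⟨hm, ?_⟩
    have := hx.1 i (i + 1 + m) (by omega) hi h1 (by
      intro k hk1 hk2
      have := hz (k - (i+1)).toNat (by omega)
      rwa [show i + 1 + ((k - (i+1)).toNat : ℤ) = k by omega] at this)
    rwa [show (i + 1 + (m:ℤ) - i - 1).toNat = m by omega] at this

lemma gap_total (X : Set (ℤ → Fin 2)) (n : ℕ) :
    (Lg X n).ncard ≤ 1 + ∑ m ∈ Finset.range n, (Fg X (n - m - 1)).ncard := by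
  apply count_le (Lg X n) (fun m => Fg X (n - m - 1))
    (fun m => Fg_fin _ _) _ (List.replicate n 0) (fun m v => List.replicate m 0 ++ 1 :: v)
  rintro w ⟨hlen, hw⟩
  rw [inLang_iff, hlen] at hw
  obtain ⟨x, hx, i, hw⟩ := hw
  rcases first_one x i n with h | ⟨m, hm, hz, h1, h⟩
  · left; rw [hw, h]
  · right
    exact ⟨m, Finset.mem_range.2 hm, _, word_one_mem _ x hx _ h1 (n - m - 1), by rw [hw, h]⟩

lemma gap_ext (S : Set ℕ) (h0 : 0 ∈ S) (m : ℕ) (hm : m ∈ S) (v : List (Fin 2))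
    (hv : InLang (SGap S) (1 :: v)) :
    InLang (SGap S) (1 :: (List.replicate m 0 ++ 1 :: v)) := by
  obtain ⟨x, hx, i, hi, hw⟩ := inLang_one hv
  let y : ℤ → Fin 2 := fun j => if i ≤ j then x j else if i - m ≤ j then 0 else 1
  have yx : ∀ j, i ≤ j → y j = x j := fun j h => by simp [y, h]
  have y0 : ∀ j, i - m ≤ j → j < i → y j = 0 := fun j h h' => by
    simp only [y, if_pos h, if_neg (not_le.2 h')]
  have y1 : ∀ j, j < i - m → y j = 1 := fun j h => by
    have h1 : ¬ i ≤ j := by omega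
    have h2 : ¬ i - m ≤ j := by omega
    simp only [y, if_neg h1, if_neg h2]
  have hyS : y ∈ SGap S := by
    refine ⟨?_, ?_⟩
    · intro p q hpq hp hq hbet
      by_cases hpi : i ≤ p
      · refine hx.1 p q hpq (by rwa [← yx p hpi]) (by rwa [← yx q (by omega)]) ?_
        intro k hk1 hk2
        rw [← yx k (by omega)]; exact hbet k hk1 hk2
      · have hp' : p < i - m := by
          by_contra hc
          rw [y0 p (by omega) (by omega)] at hp
          exact absurd hp (by decide)
        by_cases hqi : q < i
        · have hq' : q < i - m := by
            by_contra hc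
            rw [y0 q (by omega) (by omega)] at hq
            exact absurd hq (by decide)
          have : q = p + 1 := by
            by_contra hc
            have := hbet (p+1) (by omega) (by omega)
            rw [y1 _ (by omega)] at this
            exact absurd this (by decide)
          rw [show (q - p - 1).toNat = 0 by omega]; exact h0
        · have hq' : q = i := by
            by_contra hc
            have := hbet i (by omega) (by omega)
            rw [yx i le_rfl, hi] at this
            exact absurd this (by decide)
          have hp'' : p = i - m - 1 := by
            by_contra hc
            have := hbet (i - m - 1) (by omega) (by omega)
            rw [y1 _ (by omega)] at this
            exact absurd this (by decide)
          rw [show (q - p - 1).toNat = m by omega]; exact hm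
    · intro hf
      refine ⟨fun N => ?_, fun N => ?_⟩
      · obtain ⟨j, hj, hj1⟩ := (hx.2 hf).1 (max N i)
        exact ⟨j, (le_max_left _ _).trans hj, by rw [yx j ((le_max_right _ _).trans hj), hj1]⟩
      · exact ⟨min N (i - m - 1), min_le_left _ _, y1 _ (by omega)⟩
  have hword : 1 :: (List.replicate m 0 ++ 1 :: v) = word y (i - m - 1) (m + (v.length + 1) + 1) := by
    rw [word_succ, y1 _ (by omega), word_add, word_succ,
      word_congr y (fun _ => 0) (i - m - 1 + 1) m (fun k hk => y0 _ (by omega) (by omega)),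
      show i - (m:ℤ) - 1 + 1 + m = i by omega, yx i le_rfl, hi]
    congr 2
    · simp
    · congr 1
      conv_lhs => rw [hw]
      apply List.map_congr_left
      intro k hk
      exact (yx _ (by omega)).symm
  rw [hword]
  exact inLang_word _ _ hyS _ _

lemma gap_zero (S : Set ℕ) (h0 : 0 ∈ S) : 1 ≤ (Fg (SGap S) 0).ncard := by
  have : (fun _ => 1 : ℤ → Fin 2) ∈ SGap S := by
    refine ⟨?_, fun _ => ⟨fun N => ⟨N, le_rfl, rfl⟩, fun N => ⟨N, le_rfl, rfl⟩⟩⟩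
    intro p q hpq _ _ hbet
    have : q = p + 1 := by
      by_contra hc
      have : (1 : Fin 2) = 0 := hbet (p+1) (by omega) (by omega)
      exact absurd this (by decide)
    rw [show (q - p - 1).toNat = 0 by omega]; exact h0
  exact (Set.ncard_pos (Fg_fin _ _)).2 ⟨_, word_one_mem _ _ this 0 rfl 0⟩

lemma gap_lower_step (β : ℝ) (hβ1 : 1 < β) (n : ℕ) :
    ∑ m ∈ (Finset.range (n+1)).filter (fun m => betaDigit β m = 1),
        (Fg (SGap (assocS β)) (n - m)).ncard ≤ (Fg (SGap (assocS β)) (n+1)).ncard := by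
  apply le_count _ (Fg_fin _ _) (fun m => Fg (SGap (assocS β)) (n - m)) (fun m => Fg_fin _ _) _
    (fun m v => List.replicate m 0 ++ 1 :: v) rep_inj
  rintro m hm v ⟨hv1, hv2⟩
  simp only [Finset.mem_filter, Finset.mem_range] at hm
  refine ⟨?_, gap_ext _ (digit_zero β hβ1) m hm.2 v hv2⟩
  simp [hv1]; omega

lemma Fg_sub (X : Set (ℤ → Fin 2)) (n : ℕ) : (Fg X n).ncard ≤ (Lg X n).ncard := by
  apply Set.ncard_le_ncard _ (Lg_fin X n)
  rintro w ⟨hl, hw⟩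
  obtain ⟨x, hx, i, _, hw⟩ := inLang_one hw
  refine ⟨hl, ?_⟩
  rw [hw]; exact inLang_word _ _ hx _ _

end BetaAux


open BetaAux

/-- For every `β ∈ (1,2]`, the β-shift `X_β` and its associated S-gap
shift `ASS(X_β) = X(S)`, `S = {i - 1 : a_i = 1}`, have equal topological entropy. -/
theorem beta_entropy_eq_assoc_sgap
    (β : ℝ) (hβ1 : 1 < β) (hβ2 : β ≤ 2) :
    ∃ h : ℝ, HasEntropy (betaShift β) h ∧ HasEntropy (SGap (assocS β)) h := by
  refine ⟨Real.log β, entropy_of_bounds _ β hβ1 ?_ ?_, entropy_of_bounds _ β hβ1 ?_ ?_⟩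
  · intro n
    have h := beta_lower β hβ1 hβ2 n
    change β ^ n ≤ (n + 1) * ((Lg (betaShift β) n).ncard : ℝ)
    have h2 : (0:ℝ) ≤ n * ((Lg (betaShift β) n).ncard : ℝ) := by positivity
    linarith
  · intro n
    have h := upper_rec β hβ1 hβ2 (fun n => (Lg (betaShift β) n).ncard) (beta_upper_step β) n
    change ((Lg (betaShift β) n).ncard : ℝ) ≤ _
    refine h.trans ?_
    gcongr
    have : (0:ℝ) ≤ n := n.cast_nonneg
    nlinarith
  · intro n
    have h := lower_rec β hβ1 hβ2 (fun n => (Fg (SGap (assocS β)) n).ncard)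
      (gap_zero _ (digit_zero β hβ1)) (gap_lower_step β hβ1) n
    change β ^ n ≤ (n + 1) * ((Lg (SGap (assocS β)) n).ncard : ℝ)
    refine h.trans ?_
    have hs : ((Fg (SGap (assocS β)) n).ncard : ℝ) ≤ (Lg (SGap (assocS β)) n).ncard := by
      exact_mod_cast Fg_sub _ _
    exact mul_le_mul_of_nonneg_left hs (by positivity)
  · intro n
    have h := upper_rec β hβ1 hβ2 (fun n => (Fg (SGap (assocS β)) n).ncard) (gap_upper_step β)
    change ((Lg (SGap (assocS β)) n).ncard : ℝ) ≤ _
    have h1 : ((Lg (SGap (assocS β)) n).ncard : ℝ) ≤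
        1 + ∑ m ∈ Finset.range n, ((Fg (SGap (assocS β)) (n - m - 1)).ncard : ℝ) := by
      exact_mod_cast gap_total (SGap (assocS β)) n
    have h2 : ∑ m ∈ Finset.range n, ((Fg (SGap (assocS β)) (n - m - 1)).ncard : ℝ)
        ≤ ∑ m ∈ Finset.range n, (n * β ^ n : ℝ) := by
      apply Finset.sum_le_sum
      intro m hm
      have hm := Finset.mem_range.1 hm
      refine (h (n - m - 1)).trans ?_
      have h3 : n - m - 1 + 1 ≤ n := by omega
      have h4 : (((n - m - 1 : ℕ) : ℝ) + 1) ≤ n := by exact_mod_cast h3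
      have h5 : β ^ (n - m - 1) ≤ β ^ n := pow_le_pow_right₀ hβ1.le (by omega)
      exact mul_le_mul h4 h5 (by positivity) (by positivity)
    rw [Finset.sum_const, Finset.card_range, nsmul_eq_mul] at h2
    have h6 : (1:ℝ) ≤ β ^ n := one_le_pow₀ hβ1.le
    have h7 : (0:ℝ) ≤ n * β ^ n := by positivity
    nlinarith
end
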